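/- Let f ∈ L¹([−π,π]) be real-valued and even, and suppose that ess inf_{[0,π]} f > −∞ or ess sup_{[0,π]} f < ∞. Then for every n there exist a real unitary n×n matrix V_n and orderings λ_1(T_n(f)),…,λ_n(T_n(f)) and λ_1(H_n(f)),…,λ_n(H_n(f)) of the eigenvalues of T_n(f) and H_n(f) such that: Y_n = V_n Δ_n V_nᵀ with Δ_n = diag_{i=1,…,n}((−1)^{i+1}); T_n(f) = V_n D_n V_nᵀ with D_n = diag_{i=1,…,n}(λ_i(T_n(f))); H_n(f) = V_n Δ_n D_n V_nᵀ; λ_i(H_n(f)) = (−1)^{i+1} λ_i(T_n(f)) for i = 1,…,n; and moreover the sequence of multisets Λ_n⁺ = {λ_{2i−1}(T_n(f)) : i = 1,…,⌈n/2⌉} satisfies {Λ_n⁺} ∼ f, while the sequence Λ_n⁻ = {−λ_{2i}(T_n(f)) : i = 1,…,⌊n/2⌋} satisfies {Λ_n⁻} ∼ −f. -/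

import Mathlib

/-!
Since `f` is real, `T_n(f)` is symmetric Toeplitz, hence commutes with the flip `Y_n`. Thus both are
diagonalized by one orthogonal matrix `V`, and as the trace of `Y_n` is `0` or `1` the columns can be
ordered so that the eigenvalues of `Y_n` are `1, -1, 1, …` (`exists_simultaneous_diag`). The claims
on `H_n(f) = Y_n T_n(f)` follow at once; the content is the distribution of each parity class.

Let `ν` be normalized Lebesgue measure on `(-π, π]` and `w_i(x) = |∑ₖ V k i e^{ikx}|²`, a probability
density for `ν`. Then `λ_i = ∫ f w_i dν`, `∑ w_i = n`, and `∑ (-1)^i w_i(x) = ∑ₖ cos((2k+1-n)x)`.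

*Bounded even symbols `g`.* The variances of `g` under the `w_i` sum up to `n ∫ g² - ‖T_n(g)‖²`
(Frobenius norm; `sum_variance`), which is `o(n)` by Parseval's identity and Cesàro summation. So for
Lipschitz `φ` the value `φ(λ_i)` may be replaced on average by `∫ φ(g) w_i dν`. The sum of these
integrals over one parity class is `n/2 ∫ φ(g) dν` plus or minus half a sum of `n` distinct Fourier
coefficients of `φ ∘ g`, which is `o(n)` since they are square-summable (`tendsto_of_bdd`).

*Integrable symbols.* For convex Lipschitz `φ`, the sums of `φ(λ_i)` over a parity class for two
symbols `f` and `g` differ by at most `L n ‖f - g‖₁` (`abs_sum_convex_sub_le`). The reason is that the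
squared entries of the transition matrix `Vᵀ U` between the two eigenbases are doubly stochastic and
link only indices of the same parity, so that Jensen's inequality applies. Truncation of `f` then
reduces convex Lipschitz test functions to the bounded case (`tendsto_of_convex`).

*Test functions.* Differences of convex Lipschitz functions are uniformly dense in the continuous
functions of compact support, by the lattice form of the Stone-Weierstrass theorem
(`exists_isDC_approx`). Complex test functions are split into real and imaginary parts.
-/

open MeasureTheory Matrix Filter

/-- The `k`-th Fourier coefficient of `f : ℝ → ℂ` on `[-π, π]`. -/
noncomputable def fourierCoef (f : ℝ → ℂ) (k : ℤ) : ℂ :=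
  (1 / (2 * Real.pi)) * ∫ x in (-Real.pi)..Real.pi, f x * Complex.exp (-Complex.I * k * x)

/-- The `n × n` Toeplitz matrix generated by `f` (for real generating functions we take
the real parts of the Fourier coefficients, which are then real). -/
noncomputable def toeplitzR (f : ℝ → ℂ) (n : ℕ) : Matrix (Fin n) (Fin n) ℝ :=
  Matrix.of fun i j => (fourierCoef f ((i : ℤ) - (j : ℤ))).re

/-- The `n × n` exchange (flip) matrix `Y_n`. -/
def flipM (n : ℕ) : Matrix (Fin n) (Fin n) ℝ :=
  Matrix.of fun i j => if (i : ℕ) + (j : ℕ) = n - 1 then 1 else 0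

/-- Essential range of a real-valued function on a set. -/
def essRangeR (f : ℝ → ℝ) (s : Set ℝ) : Set ℝ :=
  {z : ℝ | ∀ ε > 0, 0 < volume {x ∈ s | |f x - z| < ε}}

/-! ### Simultaneous diagonalization with the flip matrix -/

/-- Two sign vectors with equal sums have equally many `+1` entries, so one is a rearrangement of
the other. -/
lemma exists_perm_of_sum_eq {n : ℕ} (s t : Fin n → ℝ) (hs : ∀ i, s i = 1 ∨ s i = -1)
    (ht : ∀ i, t i = 1 ∨ t i = -1) (h : ∑ i, s i = ∑ i, t i) :
    ∃ e : Equiv.Perm (Fin n), ∀ i, s (e i) = t i := by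
  classical
  have key : ∀ u : Fin n → ℝ, (∀ i, u i = 1 ∨ u i = -1) →
      ∑ i, u i = 2 * (Fintype.card {i // u i = 1} : ℝ) - n := by
    intro u hu
    have h1 : ∀ i, u i = 2 * (if u i = 1 then 1 else 0) - 1 := by
      intro i
      rcases hu i with h | h <;> rw [h] <;> norm_num
    rw [Finset.sum_congr rfl (fun i _ => h1 i), Finset.sum_sub_distrib, ← Finset.mul_sum,
      Finset.sum_boole, Fintype.card_subtype]
    simp
  have hcard : Fintype.card {i // t i = 1} = Fintype.card {i // s i = 1} := by
    have := key s hs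
    have := key t ht
    have : (Fintype.card {i // t i = 1} : ℝ) = Fintype.card {i // s i = 1} := by linarith
    exact_mod_cast this
  let e0 : {i // t i = 1} ≃ {i // s i = 1} := Fintype.equivOfCardEq hcard
  refine ⟨e0.extendSubtype, fun i => ?_⟩
  by_cases hi : t i = 1
  · rw [hi]; exact e0.extendSubtype_mem i hi
  · rcases hs (e0.extendSubtype i) with h' | h'
    · exact absurd h' (e0.extendSubtype_not_mem i hi)
    · rw [h', (ht i).resolve_left hi]

lemma flipM_apply {n : ℕ} (i j : Fin n) : flipM n i j = if Fin.rev i = j then 1 else 0 := by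
  have : ((i : ℕ) + (j : ℕ) = n - 1) ↔ Fin.rev i = j := by
    rw [Fin.ext_iff, Fin.val_rev]; omega
  simp [flipM, this]

lemma flipM_mul_apply {n : ℕ} (A : Matrix (Fin n) (Fin n) ℝ) (i j : Fin n) :
    (flipM n * A) i j = A (Fin.rev i) j := by
  simp [Matrix.mul_apply, flipM_apply]

lemma mul_flipM_apply {n : ℕ} (A : Matrix (Fin n) (Fin n) ℝ) (i j : Fin n) :
    (A * flipM n) i j = A i (Fin.rev j) := by
  have : ∀ x : Fin n, Fin.rev x = j ↔ Fin.rev j = x := fun x =>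
    ⟨fun h => by rw [← h, Fin.rev_rev], fun h => by rw [← h, Fin.rev_rev]⟩
  simp [Matrix.mul_apply, flipM_apply, this]

lemma flipM_mul_self (n : ℕ) : flipM n * flipM n = 1 := by
  ext i j
  rw [flipM_mul_apply, flipM_apply, Fin.rev_rev, Matrix.one_apply]

lemma flipM_transpose (n : ℕ) : (flipM n)ᵀ = flipM n := by
  ext i j
  simp only [Matrix.transpose_apply, flipM, Matrix.of_apply, add_comm]

lemma sum_neg_one_pow (n : ℕ) : ∑ i : Fin n, (-1 : ℝ) ^ (i : ℕ) = if Even n then 0 else 1 := by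
  rw [Fin.sum_univ_eq_sum_range (fun i => (-1 : ℝ) ^ i), neg_one_geom_sum]

lemma trace_flipM (n : ℕ) : (flipM n).trace = if Even n then 0 else 1 := by
  have h : ∀ i : Fin n, flipM n i i = if 2 * (i : ℕ) + 1 = n then 1 else 0 := by
    intro i
    have : ((i : ℕ) + (i : ℕ) = n - 1) ↔ 2 * (i : ℕ) + 1 = n := by omega
    simp [flipM, this]
  simp only [Matrix.trace, Matrix.diag_apply, h]
  rw [Fin.sum_univ_eq_sum_range (fun i => if 2 * i + 1 = n then (1 : ℝ) else 0)]
  split_ifs with he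
  · apply Finset.sum_eq_zero
    intro i _
    rw [if_neg]
    rintro rfl
    exact absurd he (by simp)
  · obtain ⟨k, rfl⟩ := Nat.not_even_iff_odd.1 he
    rw [Finset.sum_eq_single_of_mem k (by simp; omega)]
    · simp
    · intro b _ hb
      rw [if_neg]; omega

/-- A real symmetric matrix commuting with the flip matrix is diagonalized together with it by one
orthogonal matrix, and the columns can be ordered so that the signs alternate.  The columns are
eigenvectors of `T + c Y` for a `c` such that `2 c` is not a difference of eigenvalues of `T`. -/
lemma exists_simultaneous_diag {n : ℕ} (T : Matrix (Fin n) (Fin n) ℝ) (hT : Tᵀ = T)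
    (hc : flipM n * T = T * flipM n) :
    ∃ (V : Matrix (Fin n) (Fin n) ℝ) (lam : Fin n → ℝ), V * Vᵀ = 1 ∧
      flipM n = V * Matrix.diagonal (fun i : Fin n => ((-1 : ℝ)) ^ (i : ℕ)) * Vᵀ ∧
      T = V * Matrix.diagonal lam * Vᵀ := by
  classical
  set Y := flipM n with hY
  have hYY : Y * Y = 1 := flipM_mul_self n
  have hfin := Module.End.finite_hasEigenvalue (Matrix.toLin' T)
  set S := {μ | Module.End.HasEigenvalue (Matrix.toLin' T) μ} with hS
  obtain ⟨c2, hc2⟩ := ((hfin.image2 (fun a b => a - b) hfin)).exists_notMem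
  set c := c2 / 2 with hcdef
  have hA : (T + c • Y).IsHermitian := by
    rw [Matrix.IsHermitian, Matrix.conjTranspose_eq_transpose_of_trivial, Matrix.transpose_add,
      Matrix.transpose_smul, hT, hY, flipM_transpose]
  set U : Matrix (Fin n) (Fin n) ℝ := (hA.eigenvectorUnitary : Matrix (Fin n) (Fin n) ℝ) with hU
  have hUU : U * Uᵀ = 1 := by
    have := Unitary.coe_mul_star_self hA.eigenvectorUnitary
    rwa [Unitary.coe_star, Matrix.star_eq_conjTranspose,
      Matrix.conjTranspose_eq_transpose_of_trivial] at this
  have hUU' : Uᵀ * U = 1 := mul_eq_one_comm.1 hUU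
  set a := hA.eigenvalues with ha
  have hcol : ∀ i, (T + c • Y) *ᵥ (fun k => U k i) = a i • (fun k => U k i) := by
    intro i
    exact hA.mulVec_eigenvectorBasis i
  -- If `v` is an eigenvector of `T + c Y` for `α` and `v + Y v`, `v - Y v` are both nonzero, then
  -- they are eigenvectors of `T` for `α - c` and `α + c`, whose difference `2 c` was excluded.
  have hsign : ∀ i, ∃ s : ℝ, (s = 1 ∨ s = -1) ∧ Y *ᵥ (fun k => U k i) = s • (fun k => U k i) := by
    intro i
    set v : Fin n → ℝ := fun k => U k i with hv
    have hYYv : Y *ᵥ (Y *ᵥ v) = v := by rw [Matrix.mulVec_mulVec, hYY, Matrix.one_mulVec]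
    have hTv : T *ᵥ v = a i • v - c • (Y *ᵥ v) := by
      have := hcol i
      rw [Matrix.add_mulVec, Matrix.smul_mulVec] at this
      exact eq_sub_of_add_eq this
    have hTYv : T *ᵥ (Y *ᵥ v) = a i • (Y *ᵥ v) - c • v := by
      rw [Matrix.mulVec_mulVec, ← hc, ← Matrix.mulVec_mulVec, hTv, Matrix.mulVec_sub,
        Matrix.mulVec_smul, Matrix.mulVec_smul, hYYv]
    by_contra hcon
    push Not at hcon
    have hp : v + Y *ᵥ v ≠ 0 := by
      intro h
      refine hcon (-1) (Or.inr rfl) ?_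
      rw [neg_one_smul]; exact (neg_eq_of_add_eq_zero_right h).symm
    have hm : v - Y *ᵥ v ≠ 0 := by
      intro h
      refine hcon 1 (Or.inl rfl) ?_
      rw [one_smul]; exact (sub_eq_zero.1 h).symm
    have e1 : a i - c ∈ S := by
      refine Module.End.hasEigenvalue_of_hasEigenvector (x := v + Y *ᵥ v)
        (Module.End.hasEigenvector_iff.2 ⟨Module.End.mem_eigenspace_iff.2 ?_, hp⟩)
      rw [Matrix.toLin'_apply, Matrix.mulVec_add, hTv, hTYv]
      module
    have e2 : a i + c ∈ S := by
      refine Module.End.hasEigenvalue_of_hasEigenvector (x := v - Y *ᵥ v)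
        (Module.End.hasEigenvector_iff.2 ⟨Module.End.mem_eigenspace_iff.2 ?_, hm⟩)
      rw [Matrix.toLin'_apply, Matrix.mulVec_sub, hTv, hTYv]
      module
    exact hc2 ⟨_, e2, _, e1, by simp only [hcdef]; ring⟩
  choose s hs hYs using hsign
  have hYU : Y * U = U * Matrix.diagonal s := by
    ext k i
    rw [Matrix.mul_diagonal]
    have := congrFun (hYs i) k
    simpa [Matrix.mulVec, dotProduct, Matrix.mul_apply, mul_comm] using this
  have hTU : T * U = U * Matrix.diagonal (fun i => a i - c * s i) := by
    ext k i
    rw [Matrix.mul_diagonal]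
    have h1 := congrFun (hcol i) k
    rw [Matrix.add_mulVec, Matrix.smul_mulVec, hYs i] at h1
    have h2 : (T * U) k i = (T *ᵥ (fun k => U k i)) k := by
      simp [Matrix.mulVec, dotProduct, Matrix.mul_apply]
    rw [h2]
    simp only [Pi.add_apply, Pi.smul_apply, smul_eq_mul] at h1
    linarith
  -- Both sign vectors have sum `tr Y`, so they agree up to a permutation of the columns.
  have htr : ∑ i, s i = ∑ i : Fin n, (-1 : ℝ) ^ (i : ℕ) := by
    rw [sum_neg_one_pow, ← trace_flipM, ← hY]
    have : Y = U * Matrix.diagonal s * Uᵀ := by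
      rw [← hYU, Matrix.mul_assoc, hUU, Matrix.mul_one]
    rw [this, Matrix.trace_mul_comm, ← Matrix.mul_assoc, hUU', Matrix.one_mul,
      Matrix.trace_diagonal]
  obtain ⟨e, he⟩ := exists_perm_of_sum_eq s (fun i : Fin n => (-1 : ℝ) ^ (i : ℕ)) hs
    (fun i => neg_one_pow_eq_or ℝ i) htr
  have hdiag : ∀ d : Fin n → ℝ, ∀ M : Matrix (Fin n) (Fin n) ℝ, M * U = U * Matrix.diagonal d →
      M = U.submatrix id e * Matrix.diagonal (d ∘ e) * (U.submatrix id e)ᵀ := by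
    intro d M hM
    have h0 : M = U * Matrix.diagonal d * Uᵀ := by
      rw [← hM, Matrix.mul_assoc, hUU, Matrix.mul_one]
    have h1 : Matrix.diagonal (d ∘ e) = (Matrix.diagonal d).submatrix e e :=
      (Matrix.submatrix_diagonal_equiv d e).symm
    rw [h1, Matrix.submatrix_mul_equiv, Matrix.transpose_submatrix, Matrix.submatrix_mul_equiv,
      Matrix.submatrix_id_id]
    exact h0
  refine ⟨U.submatrix id e, (fun i => a i - c * s i) ∘ e, ?_, ?_, hdiag _ _ hTU⟩
  · rw [Matrix.transpose_submatrix, Matrix.submatrix_mul_equiv, hUU, Matrix.submatrix_id_id]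
  · have := hdiag _ _ hYU
    rwa [show s ∘ e = fun i : Fin n => (-1 : ℝ) ^ (i : ℕ) from funext he] at this

/-! ### Fourier coefficients, Toeplitz matrices and the densities of eigenvectors -/

/-- The normalized Lebesgue measure on `(-π, π]`. -/
noncomputable def circMeas : Measure ℝ :=
  ENNReal.ofReal (1 / (2 * Real.pi)) • volume.restrict (Set.Ioc (-Real.pi) Real.pi)

lemma integral_circMeas {E : Type*} [NormedAddCommGroup E] [NormedSpace ℝ E] (ψ : ℝ → E) :
    ∫ x, ψ x ∂circMeas = (1 / (2 * Real.pi)) • ∫ x in (-Real.pi)..Real.pi, ψ x := by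
  have hpi := Real.pi_pos
  rw [circMeas, integral_smul_measure, intervalIntegral.integral_of_le (by linarith),
    ENNReal.toReal_ofReal (by positivity)]

instance : IsProbabilityMeasure circMeas := by
  constructor
  have hpi := Real.pi_pos
  rw [circMeas, Measure.smul_apply, Measure.restrict_apply MeasurableSet.univ, Set.univ_inter,
    Real.volume_Ioc, smul_eq_mul, ← ENNReal.ofReal_mul (by positivity)]
  rw [show 1 / (2 * Real.pi) * (Real.pi - -Real.pi) = 1 by field_simp; ring, ENNReal.ofReal_one]

lemma integrable_circMeas {E : Type*} [NormedAddCommGroup E] {f : ℝ → E}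
    (hf : IntegrableOn f (Set.Icc (-Real.pi) Real.pi)) : Integrable f circMeas :=
  Integrable.smul_measure (hf.mono_set Set.Ioc_subset_Icc_self) ENNReal.ofReal_ne_top

lemma integrable_of_circMeas {E : Type*} [NormedAddCommGroup E] {f : ℝ → E}
    (hf : Integrable f circMeas) : Integrable f (volume.restrict (Set.Ioc (-Real.pi) Real.pi)) := by
  have hpi := Real.pi_pos
  rw [circMeas, integrable_smul_measure] at hf
  · exact hf
  · simp [hpi]
  · exact ENNReal.ofReal_ne_top

/-- The cosine Fourier coefficients `(1 / 2π) ∫ f(x) cos(kx) dx`. -/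
noncomputable def cosCoef (f : ℝ → ℝ) (k : ℤ) : ℝ := ∫ x, f x * Real.cos (k * x) ∂circMeas

lemma cosCoef_neg (f : ℝ → ℝ) (k : ℤ) : cosCoef f (-k) = cosCoef f k := by
  simp [cosCoef, neg_mul, Real.cos_neg]

lemma integrable_mul_of_continuous {f : ℝ → ℝ} (hf : Integrable f circMeas) {u : ℝ → ℝ}
    (hu : Continuous u) {C : ℝ} (hC : ∀ x, |u x| ≤ C) :
    Integrable (fun x => f x * u x) circMeas :=
  hf.mul_bdd (c := C) hu.aestronglyMeasurable (Eventually.of_forall hC)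

lemma fourierCoef_eq {f : ℝ → ℝ} (hf : Integrable f circMeas) (k : ℤ) :
    fourierCoef (fun x => (f x : ℂ)) k =
      (cosCoef f k : ℂ) - (∫ x, f x * Real.sin (k * x) ∂circMeas : ℝ) * Complex.I := by
  have h1 : fourierCoef (fun x => (f x : ℂ)) k
      = ∫ x, (f x : ℂ) * Complex.exp (-Complex.I * k * x) ∂circMeas := by
    rw [integral_circMeas, fourierCoef, Complex.real_smul]
    push_cast
    rfl
  have hc := integrable_mul_of_continuous hf (u := fun x => Real.cos (k * x)) (by fun_prop)
    (C := 1) (fun x => Real.abs_cos_le_one _)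
  have hs := integrable_mul_of_continuous hf (u := fun x => Real.sin (k * x)) (by fun_prop)
    (C := 1) (fun x => Real.abs_sin_le_one _)
  rw [h1, cosCoef, ← integral_complex_ofReal, ← integral_complex_ofReal,
    ← integral_mul_const, ← integral_sub hc.ofReal (hs.ofReal.mul_const _)]
  congr 1
  ext x
  rw [show -Complex.I * (k : ℂ) * (x : ℂ) = ((-(k * x) : ℝ) : ℂ) * Complex.I by push_cast; ring,
    Complex.exp_mul_I, ← Complex.ofReal_cos, ← Complex.ofReal_sin, Real.cos_neg, Real.sin_neg]
  push_cast
  ring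

lemma toeplitzR_apply {f : ℝ → ℝ} (hf : Integrable f circMeas) (n : ℕ) (i j : Fin n) :
    toeplitzR (fun x => (f x : ℂ)) n i j = cosCoef f ((i : ℤ) - (j : ℤ)) := by
  simp [toeplitzR, fourierCoef_eq hf]

lemma toeplitzR_transpose {f : ℝ → ℝ} (hf : Integrable f circMeas) (n : ℕ) :
    (toeplitzR (fun x => (f x : ℂ)) n)ᵀ = toeplitzR (fun x => (f x : ℂ)) n := by
  ext i j
  rw [Matrix.transpose_apply, toeplitzR_apply hf, toeplitzR_apply hf, ← cosCoef_neg, neg_sub]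

lemma flipM_comm_toeplitzR {f : ℝ → ℝ} (hf : Integrable f circMeas) (n : ℕ) :
    flipM n * toeplitzR (fun x => (f x : ℂ)) n = toeplitzR (fun x => (f x : ℂ)) n * flipM n := by
  ext i j
  rw [flipM_mul_apply, mul_flipM_apply, toeplitzR_apply hf, toeplitzR_apply hf, ← cosCoef_neg]
  congr 1
  rw [Fin.val_rev, Fin.val_rev, Nat.cast_sub (by omega), Nat.cast_sub (by omega)]
  push_cast
  ring

lemma integral_sin_eq_zero_of_even {f : ℝ → ℝ} (hf : ∀ x, f (-x) = f x) (k : ℤ) :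
    ∫ x, f x * Real.sin (k * x) ∂circMeas = 0 := by
  rw [integral_circMeas]
  have h := intervalIntegral.integral_comp_neg (a := -Real.pi) (b := Real.pi)
    (fun x => f x * Real.sin (k * x))
  simp only [hf, mul_neg, Real.sin_neg, neg_neg, intervalIntegral.integral_neg] at h
  have : ∫ x in (-Real.pi)..Real.pi, f x * Real.sin (k * x) = 0 := by linarith
  rw [this, smul_zero]

/-- Parseval's identity; the sine coefficients of an even function vanish. -/
lemma hasSum_sq_cosCoef {g : ℝ → ℝ} (hg : MemLp g 2 circMeas) (hgi : Integrable g circMeas)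
    (heven : ∀ x, g (-x) = g x) :
    HasSum (fun k : ℤ => cosCoef g k ^ 2) (∫ x, g x ^ 2 ∂circMeas) := by
  have hpi := Real.pi_pos
  have hab : -Real.pi < Real.pi := by linarith
  have hg' : MemLp (fun x => (g x : ℂ)) 2 (volume.restrict (Set.Ioc (-Real.pi) Real.pi)) := by
    have h2 : MemLp g 2 (volume.restrict (Set.Ioc (-Real.pi) Real.pi)) := by
      have := hg.smul_measure (c := (ENNReal.ofReal (1 / (2 * Real.pi)))⁻¹) (by simp [hpi])
      rwa [circMeas, smul_smul, ENNReal.inv_mul_cancel (by simp [hpi]) ENNReal.ofReal_ne_top,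
        one_smul] at this
    exact h2.ofReal
  have h := hasSum_sq_fourierCoeffOn hab hg'
  convert h using 1
  · ext k
    have h1 : fourierCoeffOn hab (fun x => (g x : ℂ)) k = fourierCoef (fun x => (g x : ℂ)) k := by
      rw [fourierCoeffOn_eq_integral, fourierCoef, Complex.real_smul]
      have : Real.pi - -Real.pi = 2 * Real.pi := by ring
      rw [this]
      congr 1
      · push_cast; rfl
      · apply intervalIntegral.integral_congr
        intro x _
        simp only [fourier_coe_apply, smul_eq_mul]
        rw [mul_comm]
        congr 2
        push_cast
        field_simp
    rw [h1, fourierCoef_eq hgi, integral_sin_eq_zero_of_even heven]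
    simp
  · rw [integral_circMeas]
    simp only [Complex.norm_real, Real.norm_eq_abs, sq_abs]
    congr 1
    rw [one_div]; congr 1; ring

/-- The weight `|∑ₖ V k i e^{ikx}|²` of the `i`-th column of `V`, written in real form. -/
noncomputable def wt {n : ℕ} (V : Matrix (Fin n) (Fin n) ℝ) (i : Fin n) (x : ℝ) : ℝ :=
  ∑ k, ∑ l, V k i * V l i * Real.cos (((k : ℤ) - (l : ℤ) : ℤ) * x)

lemma wt_eq_sq {n : ℕ} (V : Matrix (Fin n) (Fin n) ℝ) (i : Fin n) (x : ℝ) :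
    wt V i x = (∑ k, V k i * Real.cos ((k : ℕ) * x)) ^ 2
      + (∑ k, V k i * Real.sin ((k : ℕ) * x)) ^ 2 := by
  rw [sq, sq, Finset.sum_mul_sum, Finset.sum_mul_sum, ← Finset.sum_add_distrib, wt]
  refine Finset.sum_congr rfl fun k _ => ?_
  rw [← Finset.sum_add_distrib]
  refine Finset.sum_congr rfl fun l _ => ?_
  push_cast
  rw [sub_mul, Real.cos_sub]
  ring

lemma wt_nonneg {n : ℕ} (V : Matrix (Fin n) (Fin n) ℝ) (i : Fin n) (x : ℝ) : 0 ≤ wt V i x := by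
  rw [wt_eq_sq]; positivity

lemma continuous_wt {n : ℕ} (V : Matrix (Fin n) (Fin n) ℝ) (i : Fin n) : Continuous (wt V i) := by
  unfold wt; fun_prop

lemma sum_mul_wt {n : ℕ} (V : Matrix (Fin n) (Fin n) ℝ) (d : Fin n → ℝ) (x : ℝ) :
    ∑ i, d i * wt V i x = ∑ k, ∑ l, (V * Matrix.diagonal d * Vᵀ) k l *
      Real.cos (((k : ℤ) - (l : ℤ) : ℤ) * x) := by
  simp only [wt, Matrix.mul_apply (M := V * Matrix.diagonal d), Matrix.mul_diagonal,
    Matrix.transpose_apply, Finset.mul_sum, Finset.sum_mul]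
  rw [Finset.sum_comm]
  refine Finset.sum_congr rfl fun k _ => ?_
  rw [Finset.sum_comm]
  refine Finset.sum_congr rfl fun l _ => Finset.sum_congr rfl fun i _ => ?_
  ring

lemma sum_wt {n : ℕ} {V : Matrix (Fin n) (Fin n) ℝ} (hV : V * Vᵀ = 1) (x : ℝ) :
    ∑ i, wt V i x = n := by
  have h := sum_mul_wt V (fun _ => 1) x
  have h1 : Matrix.diagonal (fun _ : Fin n => (1 : ℝ)) = 1 := Matrix.diagonal_one
  simp only [one_mul, h1, mul_one, hV, Matrix.one_apply] at h
  rw [h]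
  simp

/-- The flip-weighted sum of the densities.  Its frequencies are pairwise distinct, which is what
makes both parity classes asymptotically equidistributed. -/
lemma sum_sign_wt {n : ℕ} {V : Matrix (Fin n) (Fin n) ℝ}
    (hY : flipM n = V * Matrix.diagonal (fun i : Fin n => ((-1 : ℝ)) ^ (i : ℕ)) * Vᵀ) (x : ℝ) :
    ∑ i : Fin n, (-1 : ℝ) ^ (i : ℕ) * wt V i x
      = ∑ k : Fin n, Real.cos ((2 * (k : ℤ) + 1 - n : ℤ) * x) := by
  rw [sum_mul_wt, ← hY]
  refine Finset.sum_congr rfl fun k _ => ?_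
  simp only [flipM_apply, ite_mul, one_mul, zero_mul, Finset.sum_ite_eq, Finset.mem_univ, if_true]
  congr 3
  rw [Fin.val_rev, Nat.cast_sub (by omega)]
  push_cast
  ring

lemma wt_le {n : ℕ} {V : Matrix (Fin n) (Fin n) ℝ} (hV : V * Vᵀ = 1) (i : Fin n) (x : ℝ) :
    |wt V i x| ≤ n := by
  rw [abs_of_nonneg (wt_nonneg V i x), ← sum_wt hV x]
  exact Finset.single_le_sum (f := fun i => wt V i x) (fun j _ => wt_nonneg V j x)
    (Finset.mem_univ i)

lemma integrable_mul_wt {n : ℕ} {V : Matrix (Fin n) (Fin n) ℝ} (hV : V * Vᵀ = 1) (i : Fin n)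
    {f : ℝ → ℝ} (hf : Integrable f circMeas) : Integrable (fun x => f x * wt V i x) circMeas :=
  integrable_mul_of_continuous hf (continuous_wt V i) (wt_le hV i)

lemma integral_mul_wt {n : ℕ} (V : Matrix (Fin n) (Fin n) ℝ) (i : Fin n)
    {f : ℝ → ℝ} (hf : Integrable f circMeas) :
    ∫ x, f x * wt V i x ∂circMeas = (Vᵀ * toeplitzR (fun x => (f x : ℂ)) n * V) i i := by
  have hcomp_int : ∀ k l : Fin n, Integrable (fun x => V k i * V l i *
      (f x * Real.cos (((k : ℤ) - (l : ℤ) : ℤ) * x))) circMeas := fun k l =>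
    (integrable_mul_of_continuous hf (by fun_prop) (C := 1)
      (fun x => Real.abs_cos_le_one _)).const_mul _
  calc ∫ x, f x * wt V i x ∂circMeas
      = ∫ x, ∑ k, ∑ l, V k i * V l i *
          (f x * Real.cos (((k : ℤ) - (l : ℤ) : ℤ) * x)) ∂circMeas := by
        congr 1; ext x
        rw [wt, Finset.mul_sum]
        refine Finset.sum_congr rfl fun k _ => ?_
        rw [Finset.mul_sum]
        refine Finset.sum_congr rfl fun l _ => ?_
        ring
    _ = ∑ k, ∑ l, V k i * V l i * cosCoef f ((k : ℤ) - (l : ℤ)) := by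
        rw [integral_finsetSum _ fun k _ => integrable_finsetSum _ fun l _ => hcomp_int k l]
        refine Finset.sum_congr rfl fun k _ => ?_
        rw [integral_finsetSum _ fun l _ => hcomp_int k l]
        refine Finset.sum_congr rfl fun l _ => ?_
        rw [integral_const_mul, cosCoef]
    _ = (Vᵀ * toeplitzR (fun x => (f x : ℂ)) n * V) i i := by
        simp only [Matrix.mul_apply, Matrix.transpose_apply, toeplitzR_apply hf, Finset.sum_mul]
        rw [Finset.sum_comm]
        refine Finset.sum_congr rfl fun k _ => Finset.sum_congr rfl fun l _ => ?_
        ring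

/-- Each eigenvalue is the mean of `f` under the density of its eigenvector. -/
lemma integral_mul_wt_eq {n : ℕ} {V : Matrix (Fin n) (Fin n) ℝ} {lam : Fin n → ℝ}
    (hV : V * Vᵀ = 1) {f : ℝ → ℝ} (hf : Integrable f circMeas)
    (hT : toeplitzR (fun x => (f x : ℂ)) n = V * Matrix.diagonal lam * Vᵀ) (i : Fin n) :
    ∫ x, f x * wt V i x ∂circMeas = lam i := by
  have hV' : Vᵀ * V = 1 := mul_eq_one_comm.1 hV
  have : Vᵀ * (V * Matrix.diagonal lam * Vᵀ) * V = (Vᵀ * V) * Matrix.diagonal lam * (Vᵀ * V) := by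
    simp only [Matrix.mul_assoc]
  rw [integral_mul_wt V i hf, hT, this, hV', Matrix.one_mul, Matrix.mul_one,
    Matrix.diagonal_apply_eq]

lemma cosCoef_one (k : ℤ) : cosCoef (fun _ => 1) k = if k = 0 then 1 else 0 := by
  split_ifs with h
  · simp [cosCoef, h]
  · have hk : (k : ℝ) ≠ 0 := by exact_mod_cast h
    rw [cosCoef, integral_circMeas]
    simp only [one_mul]
    rw [intervalIntegral.integral_comp_mul_left (fun x => Real.cos x) hk, integral_cos]
    simp [Real.sin_int_mul_pi]

lemma integral_wt {n : ℕ} {V : Matrix (Fin n) (Fin n) ℝ} (hV : V * Vᵀ = 1) (i : Fin n) :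
    ∫ x, wt V i x ∂circMeas = 1 := by
  have h1 : Integrable (fun _ : ℝ => (1 : ℝ)) circMeas := integrable_const _
  have hT : toeplitzR (fun _ => ((1 : ℝ) : ℂ)) n
      = V * Matrix.diagonal (fun _ => (1 : ℝ)) * Vᵀ := by
    rw [show Matrix.diagonal (fun _ : Fin n => (1 : ℝ)) = 1 from Matrix.diagonal_one,
      Matrix.mul_one, hV]
    ext k l
    rw [toeplitzR_apply h1, cosCoef_one, Matrix.one_apply]
    congr 1
    rw [sub_eq_zero, Nat.cast_inj, Fin.ext_iff]
  simpa using integral_mul_wt_eq hV h1 hT i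

/-! ### Stability of convex spectral sums in `L¹` -/

/-- `V` and `lam` diagonalize the flip matrix, with alternating signs, and `T_n(f)`. -/
def IsFlipDiag (f : ℝ → ℝ) (n : ℕ) (V : Matrix (Fin n) (Fin n) ℝ) (lam : Fin n → ℝ) : Prop :=
  V * Vᵀ = 1 ∧
  flipM n = V * Matrix.diagonal (fun i : Fin n => ((-1 : ℝ)) ^ (i : ℕ)) * Vᵀ ∧
  toeplitzR (fun x => (f x : ℂ)) n = V * Matrix.diagonal lam * Vᵀ

lemma exists_isFlipDiag {f : ℝ → ℝ} (hf : Integrable f circMeas) (n : ℕ) :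
    ∃ V lam, IsFlipDiag f n V lam :=
  exists_simultaneous_diag _ (toeplitzR_transpose hf n) (flipM_comm_toeplitzR hf n)

/-- The indicator of the even (`σ = 1`) or odd (`σ = -1`) indices. -/
noncomputable def parWt (σ : ℝ) {n : ℕ} (i : Fin n) : ℝ := (1 + σ * (-1) ^ (i : ℕ)) / 2

lemma parWt_nonneg {σ : ℝ} (hσ : σ = 1 ∨ σ = -1) {n : ℕ} (i : Fin n) : 0 ≤ parWt σ i := by
  rcases hσ with rfl | rfl <;> rcases neg_one_pow_eq_or ℝ (i : ℕ) with h | h <;>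
    rw [parWt, h] <;> norm_num

lemma parWt_le_one {σ : ℝ} (hσ : σ = 1 ∨ σ = -1) {n : ℕ} (i : Fin n) : parWt σ i ≤ 1 := by
  rcases hσ with rfl | rfl <;> rcases neg_one_pow_eq_or ℝ (i : ℕ) with h | h <;>
    rw [parWt, h] <;> norm_num

/-- One-sided stability in `L¹` of convex spectral sums over one parity class: each eigenvalue of
`T_n(g)` is, up to an error whose total is `n ‖f - g‖₁`, an average of eigenvalues of `T_n(f)` with
the squared entries of the orthogonal matrix `Vᵀ U` as weights, and Jensen's inequality applies. -/
lemma sum_convex_le {f g : ℝ → ℝ} (hf : Integrable f circMeas) (hg : Integrable g circMeas)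
    {n : ℕ} {V U : Matrix (Fin n) (Fin n) ℝ} {lam kap : Fin n → ℝ}
    (hV : IsFlipDiag f n V lam) (hU : IsFlipDiag g n U kap) {σ : ℝ} (hσ : σ = 1 ∨ σ = -1)
    {φ : ℝ → ℝ} (hφ : ConvexOn ℝ Set.univ φ) {L : NNReal} (hL : LipschitzWith L φ) :
    ∑ i, parWt σ i * φ (kap i) ≤ ∑ i, parWt σ i * φ (lam i)
      + L * (n * ∫ x, |f x - g x| ∂circMeas) := by
  obtain ⟨hV1, hVY, hVT⟩ := hV
  obtain ⟨hU1, hUY, hUT⟩ := hU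
  have hV1' : Vᵀ * V = 1 := mul_eq_one_comm.1 hV1
  have hU1' : Uᵀ * U = 1 := mul_eq_one_comm.1 hU1
  set P := Vᵀ * U with hP
  have hPt : Pᵀ = Uᵀ * V := by rw [hP, Matrix.transpose_mul, Matrix.transpose_transpose]
  have hPP : P * Pᵀ = 1 := by
    rw [hPt, hP, Matrix.mul_assoc, ← Matrix.mul_assoc U, hU1, Matrix.one_mul, hV1']
  have hPP' : Pᵀ * P = 1 := mul_eq_one_comm.1 hPP
  have hrow : ∀ i, ∑ j, P i j ^ 2 = 1 := by
    intro i
    have := congrFun (congrFun hPP i) i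
    rw [Matrix.mul_apply, Matrix.one_apply_eq] at this
    simpa [sq] using this
  have hcol : ∀ j, ∑ i, P i j ^ 2 = 1 := by
    intro j
    have := congrFun (congrFun hPP' j) j
    rw [Matrix.mul_apply, Matrix.one_apply_eq] at this
    simpa [sq] using this
  -- `Vᵀ U` commutes with `diag((-1)^i)`, so its entries link only indices of equal parity.
  have hpar : ∀ i j, parWt σ j * P i j ^ 2 = parWt σ i * P i j ^ 2 := by
    intro i j
    have h1 : Matrix.diagonal (fun i : Fin n => ((-1 : ℝ)) ^ (i : ℕ)) * P
        = P * Matrix.diagonal (fun i : Fin n => ((-1 : ℝ)) ^ (i : ℕ)) := by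
      have h2 : Vᵀ * flipM n * U = Matrix.diagonal (fun i : Fin n => ((-1 : ℝ)) ^ (i : ℕ)) * P := by
        rw [hVY, Matrix.mul_assoc V, ← Matrix.mul_assoc Vᵀ, hV1', Matrix.one_mul, Matrix.mul_assoc]
      have h3 : Vᵀ * flipM n * U = P * Matrix.diagonal (fun i : Fin n => ((-1 : ℝ)) ^ (i : ℕ)) := by
        rw [hUY, Matrix.mul_assoc, Matrix.mul_assoc _ _ U, hU1', Matrix.mul_one, ← Matrix.mul_assoc]
      rw [← h2, h3]
    have h4 := congrFun (congrFun h1 i) j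
    rw [Matrix.mul_diagonal, Matrix.diagonal_mul] at h4
    simp only [parWt]
    linear_combination (-σ / 2 * P i j) * h4
  have hdiag : ∀ j, ∫ x, f x * wt U j x ∂circMeas = ∑ i, P i j ^ 2 * lam i := by
    intro j
    have : Uᵀ * (V * Matrix.diagonal lam * Vᵀ) * U = Pᵀ * Matrix.diagonal lam * P := by
      rw [hPt, hP]; simp only [Matrix.mul_assoc]
    rw [integral_mul_wt U j hf, hVT, this, Matrix.mul_apply]
    refine Finset.sum_congr rfl fun i _ => ?_
    rw [Matrix.mul_diagonal, Matrix.transpose_apply]; ring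
  have habs : Integrable (fun x => |f x - g x|) circMeas := (hf.sub hg).abs
  have hterm : ∀ j, φ (kap j) ≤ ∑ i, P i j ^ 2 * φ (lam i)
      + L * ∫ x, |f x - g x| * wt U j x ∂circMeas := by
    intro j
    have hJ : φ (∑ i, P i j ^ 2 * lam i) ≤ ∑ i, P i j ^ 2 * φ (lam i) := by
      have := hφ.map_sum_le (t := Finset.univ) (w := fun i => P i j ^ 2) (p := lam)
        (fun i _ => sq_nonneg _) (hcol j) (fun i _ => Set.mem_univ _)
      simpa [smul_eq_mul] using this
    have hd : |kap j - ∑ i, P i j ^ 2 * lam i| ≤ ∫ x, |f x - g x| * wt U j x ∂circMeas := by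
      rw [← hdiag, ← integral_mul_wt_eq hU1 hg hUT j, ← integral_sub (integrable_mul_wt hU1 j hg)
        (integrable_mul_wt hU1 j hf)]
      refine (abs_integral_le_integral_abs).trans (le_of_eq ?_)
      congr 1; ext x
      rw [← sub_mul, abs_mul, abs_of_nonneg (wt_nonneg U j x), abs_sub_comm]
    have hl := hL.dist_le_mul (kap j) (∑ i, P i j ^ 2 * lam i)
    rw [Real.dist_eq, Real.dist_eq] at hl
    have := (abs_le.1 hl).2
    have := mul_le_mul_of_nonneg_left hd L.coe_nonneg
    linarith
  calc ∑ j, parWt σ j * φ (kap j)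
      ≤ ∑ j, (parWt σ j * ∑ i, P i j ^ 2 * φ (lam i)
          + L * ∫ x, |f x - g x| * wt U j x ∂circMeas) := by
        refine Finset.sum_le_sum fun j _ => ?_
        have h0 := parWt_nonneg hσ j
        have h1 := parWt_le_one hσ j
        have h2 : 0 ≤ L * ∫ x, |f x - g x| * wt U j x ∂circMeas :=
          mul_nonneg L.coe_nonneg (integral_nonneg fun x =>
            mul_nonneg (abs_nonneg _) (wt_nonneg U j x))
        have h3 := mul_le_mul_of_nonneg_left (hterm j) h0
        rw [mul_add] at h3
        have h4 := mul_le_of_le_one_left h2 h1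
        linarith
    _ = ∑ i, parWt σ i * φ (lam i) + L * (n * ∫ x, |f x - g x| ∂circMeas) := by
        rw [Finset.sum_add_distrib, ← Finset.mul_sum]
        congr 1
        · calc ∑ j, parWt σ j * ∑ i, P i j ^ 2 * φ (lam i)
              = ∑ j, ∑ i, parWt σ i * P i j ^ 2 * φ (lam i) := by
                refine Finset.sum_congr rfl fun j _ => ?_
                rw [Finset.mul_sum]
                refine Finset.sum_congr rfl fun i _ => ?_
                rw [← hpar i j]; ring
            _ = ∑ i, parWt σ i * φ (lam i) := by
                rw [Finset.sum_comm]
                refine Finset.sum_congr rfl fun i _ => ?_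
                rw [← Finset.sum_mul, ← Finset.mul_sum, hrow, mul_one]
        · congr 1
          rw [← integral_finsetSum _ fun j _ => integrable_mul_wt hU1 j habs, ← integral_const_mul]
          congr 1; ext x
          rw [← Finset.mul_sum, sum_wt hU1]; ring

lemma abs_sum_convex_sub_le {f g : ℝ → ℝ} (hf : Integrable f circMeas) (hg : Integrable g circMeas)
    {n : ℕ} {V U : Matrix (Fin n) (Fin n) ℝ} {lam kap : Fin n → ℝ}
    (hV : IsFlipDiag f n V lam) (hU : IsFlipDiag g n U kap) {σ : ℝ} (hσ : σ = 1 ∨ σ = -1)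
    {φ : ℝ → ℝ} (hφ : ConvexOn ℝ Set.univ φ) {L : NNReal} (hL : LipschitzWith L φ) :
    |∑ i, parWt σ i * φ (lam i) - ∑ i, parWt σ i * φ (kap i)|
      ≤ L * (n * ∫ x, |f x - g x| ∂circMeas) := by
  have h1 := sum_convex_le hf hg hV hU hσ hφ hL
  have h2 := sum_convex_le hg hf hU hV hσ hφ hL
  simp only [abs_sub_comm (g _)] at h2
  rw [abs_le]
  constructor <;> linarith

/-! ### Bounded symbols -/

/-- The double sum over `i, j < n` is the sum over `m < n` of the symmetric partial sums over
`[-m, m]`, so the averages are Cesàro means of a convergent sequence. -/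
lemma tendsto_cesaro_int {a : ℤ → ℝ} {S : ℝ} (ha : HasSum a S) (heven : ∀ k, a (-k) = a k) :
    Tendsto (fun n : ℕ => (n⁻¹ : ℝ) * ∑ i : Fin n, ∑ j : Fin n, a ((i : ℤ) - (j : ℤ)))
      atTop (nhds S) := by
  have hu : Tendsto (fun N : ℕ => ∑ k ∈ Finset.Icc (-(N : ℤ)) N, a k) atTop (nhds S) := by
    have h := ha.comp (SummationFilter.LeAtTop.le_atTop (L := SummationFilter.symmetricIcc ℤ))
    have h2 := h.comp (tendsto_natCast_atTop_atTop (R := ℤ))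
    exact h2
  have hrec : ∀ m : ℕ, ∑ k ∈ Finset.Icc (-(m : ℤ)) m, a k
      = a 0 + 2 * ∑ k ∈ Finset.range m, a (k + 1 : ℕ) := by
    intro m
    induction m with
    | zero => simp
    | succ m ih =>
      have : Finset.Icc (-((m + 1 : ℕ) : ℤ)) (m + 1 : ℕ)
          = insert (-((m + 1 : ℕ) : ℤ)) (insert ((m + 1 : ℕ) : ℤ) (Finset.Icc (-(m : ℤ)) m)) := by
        ext k; simp only [Finset.mem_Icc, Finset.mem_insert]; omega
      rw [this, Finset.sum_insert (by simp; omega), Finset.sum_insert (by simp), ih,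
        Finset.sum_range_succ, heven]
      ring
  have hsum : ∀ n : ℕ, ∑ i : Fin n, ∑ j : Fin n, a ((i : ℤ) - (j : ℤ))
      = ∑ m ∈ Finset.range n, ∑ k ∈ Finset.Icc (-(m : ℤ)) m, a k := by
    intro n
    induction n with
    | zero => simp
    | succ n ih =>
      rw [Finset.sum_range_succ, ← ih, hrec, Fin.sum_univ_castSucc]
      simp only [Fin.sum_univ_castSucc, Fin.val_castSucc, Fin.val_last, Finset.sum_add_distrib,
        sub_self]
      have h1 : ∑ j : Fin n, a ((n : ℤ) - (j : ℤ)) = ∑ k ∈ Finset.range n, a (k + 1 : ℕ) := by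
        rw [Fin.sum_univ_eq_sum_range (fun j => a ((n : ℤ) - (j : ℤ))), ← Finset.sum_range_reflect]
        refine Finset.sum_congr rfl fun j hj => ?_
        rw [Finset.mem_range] at hj
        congr 1; omega
      have h2 : ∑ j : Fin n, a ((j : ℤ) - (n : ℤ)) = ∑ k ∈ Finset.range n, a (k + 1 : ℕ) := by
        rw [← h1]
        refine Finset.sum_congr rfl fun j _ => ?_
        rw [← heven, neg_sub]
      rw [h1, h2]; ring
  simp only [hsum]
  exact hu.cesaro

/-- The variances of `g` under the densities `wt V i` sum up to `n ∫ g² - ‖T_n(g)‖²`, with the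
Frobenius norm. -/
lemma sum_variance {g : ℝ → ℝ} (hg : Integrable g circMeas)
    (hg2 : Integrable (fun x => g x ^ 2) circMeas) {n : ℕ} {V : Matrix (Fin n) (Fin n) ℝ}
    {kap : Fin n → ℝ} (hV : IsFlipDiag g n V kap) :
    ∑ i, ∫ x, (g x - kap i) ^ 2 * wt V i x ∂circMeas = n * ∫ x, g x ^ 2 ∂circMeas
      - ∑ i : Fin n, ∑ j : Fin n, cosCoef g ((i : ℤ) - (j : ℤ)) ^ 2 := by
  obtain ⟨hV1, hVY, hVT⟩ := hV
  have hV1' : Vᵀ * V = 1 := mul_eq_one_comm.1 hV1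
  have hone : Integrable (fun _ : ℝ => (1 : ℝ)) circMeas := integrable_const _
  have hi : ∀ i, ∫ x, (g x - kap i) ^ 2 * wt V i x ∂circMeas
      = ∫ x, g x ^ 2 * wt V i x ∂circMeas - kap i ^ 2 := by
    intro i
    have h1 : ∀ x, (g x - kap i) ^ 2 * wt V i x = g x ^ 2 * wt V i x
        - (2 * kap i) * (g x * wt V i x) + kap i ^ 2 * (1 * wt V i x) := fun x => by ring
    simp only [h1]
    have hsub : Integrable (fun x => g x ^ 2 * wt V i x - (2 * kap i) * (g x * wt V i x))
        circMeas := (integrable_mul_wt hV1 i hg2).sub ((integrable_mul_wt hV1 i hg).const_mul _)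
    rw [integral_add hsub
      ((integrable_mul_wt hV1 i hone).const_mul _),
      integral_sub (integrable_mul_wt hV1 i hg2) ((integrable_mul_wt hV1 i hg).const_mul _),
      integral_const_mul, integral_const_mul, integral_mul_wt_eq hV1 hg hVT i]
    simp only [one_mul, integral_wt hV1 i]
    ring
  simp only [hi, Finset.sum_sub_distrib]
  congr 1
  · rw [← integral_finsetSum _ fun i _ => integrable_mul_wt hV1 i hg2, ← integral_const_mul]
    congr 1; ext x
    rw [← Finset.mul_sum, sum_wt hV1]; ring
  · have ht : (toeplitzR (fun x => (g x : ℂ)) n * (toeplitzR (fun x => (g x : ℂ)) n)ᵀ).trace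
        = ∑ i, kap i ^ 2 := by
      have : V * Matrix.diagonal kap * Vᵀ * (V * Matrix.diagonal kap * Vᵀ)
          = V * (Matrix.diagonal kap * Matrix.diagonal kap * Vᵀ) := by
        simp only [Matrix.mul_assoc]
        rw [← Matrix.mul_assoc Vᵀ V, hV1', Matrix.one_mul]
      rw [toeplitzR_transpose hg, hVT, this, Matrix.trace_mul_comm, Matrix.mul_assoc, hV1',
        Matrix.mul_one, Matrix.diagonal_mul_diagonal, Matrix.trace_diagonal]
      simp only [sq]
    rw [← ht, Matrix.trace]
    refine Finset.sum_congr rfl fun i _ => ?_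
    rw [Matrix.diag_apply, Matrix.mul_apply]
    refine Finset.sum_congr rfl fun j _ => ?_
    rw [Matrix.transpose_apply, toeplitzR_apply hg, sq]

lemma abs_le_young (t : ℝ) {η : ℝ} (hη : 0 < η) : |t| ≤ (η⁻¹ * t ^ 2 + η) / 2 := by
  have h : 0 ≤ η⁻¹ * (|t| - η) ^ 2 := by positivity
  have h2 : η⁻¹ * (|t| - η) ^ 2 = η⁻¹ * t ^ 2 - 2 * |t| + η := by
    rw [sub_sq, sq_abs]; field_simp
  linarith

/-- The sum of the cosine coefficients at the `n` frequencies of the flip-weighted kernel is `o(n)`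
(take `η` small, then `n` large), by square-summability. -/
lemma abs_sum_cosCoef_le {ψ : ℝ → ℝ} {S : ℝ} (hS : HasSum (fun k : ℤ => cosCoef ψ k ^ 2) S)
    (n : ℕ) {η : ℝ} (hη : 0 < η) :
    |∑ k : Fin n, cosCoef ψ (2 * (k : ℤ) + 1 - n)| ≤ (η⁻¹ * S + η * n) / 2 := by
  have h1 : ∑ k : Fin n, cosCoef ψ (2 * (k : ℤ) + 1 - n) ^ 2 ≤ S := by
    have hinj : Function.Injective (fun k : Fin n => 2 * (k : ℤ) + 1 - n) := by
      intro a b h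
      simp only at h
      ext; omega
    have := sum_le_hasSum (Finset.univ.map ⟨_, hinj⟩) (fun k _ => sq_nonneg _) hS
    simpa using this
  calc |∑ k : Fin n, cosCoef ψ (2 * (k : ℤ) + 1 - n)|
      ≤ ∑ k : Fin n, |cosCoef ψ (2 * (k : ℤ) + 1 - n)| := Finset.abs_sum_le_sum_abs _ _
    _ ≤ ∑ k : Fin n, (η⁻¹ * cosCoef ψ (2 * (k : ℤ) + 1 - n) ^ 2 + η) / 2 :=
        Finset.sum_le_sum fun k _ => abs_le_young _ hη
    _ = (η⁻¹ * ∑ k : Fin n, cosCoef ψ (2 * (k : ℤ) + 1 - n) ^ 2 + η * n) / 2 := by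
        rw [← Finset.sum_div, Finset.sum_add_distrib, ← Finset.mul_sum]
        simp [mul_comm]
    _ ≤ _ := by
        have := mul_le_mul_of_nonneg_left h1 (inv_nonneg.2 hη.le)
        linarith

lemma integral_mul_parWt {ψ : ℝ → ℝ} (hψ : Integrable ψ circMeas) {n : ℕ}
    {V : Matrix (Fin n) (Fin n) ℝ} (hV1 : V * Vᵀ = 1)
    (hVY : flipM n = V * Matrix.diagonal (fun i : Fin n => ((-1 : ℝ)) ^ (i : ℕ)) * Vᵀ) (σ : ℝ) :
    ∑ i, parWt σ i * ∫ x, ψ x * wt V i x ∂circMeas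
      = (n * ∫ x, ψ x ∂circMeas + σ * ∑ k : Fin n, cosCoef ψ (2 * (k : ℤ) + 1 - n)) / 2 := by
  have hc : ∀ k : Fin n, Integrable
      (fun x => ψ x * Real.cos ((2 * (k : ℤ) + 1 - n : ℤ) * x)) circMeas := fun k =>
    integrable_mul_of_continuous hψ (by fun_prop) (C := 1) (fun x => Real.abs_cos_le_one _)
  have h1 : ∑ i, ∫ x, ψ x * wt V i x ∂circMeas = n * ∫ x, ψ x ∂circMeas := by
    rw [← integral_finsetSum _ fun i _ => integrable_mul_wt hV1 i hψ, ← integral_const_mul]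
    congr 1; ext x
    rw [← Finset.mul_sum, sum_wt hV1]; ring
  have h2 : ∑ i : Fin n, (-1 : ℝ) ^ (i : ℕ) * ∫ x, ψ x * wt V i x ∂circMeas
      = ∑ k : Fin n, cosCoef ψ (2 * (k : ℤ) + 1 - n) := by
    simp only [cosCoef, ← integral_const_mul]
    rw [← integral_finsetSum _ fun k _ => hc k,
      ← integral_finsetSum _ fun i _ => (integrable_mul_wt hV1 i hψ).const_mul _]
    congr 1; ext x
    rw [← Finset.mul_sum, ← sum_sign_wt hVY, Finset.mul_sum]
    exact Finset.sum_congr rfl fun i _ => by ring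
  have h3 : ∀ i : Fin n, parWt σ i * ∫ x, ψ x * wt V i x ∂circMeas
      = ((∫ x, ψ x * wt V i x ∂circMeas)
        + σ * ((-1 : ℝ) ^ (i : ℕ) * ∫ x, ψ x * wt V i x ∂circMeas)) / 2 := fun i => by
    rw [parWt]; ring
  rw [Finset.sum_congr rfl fun i _ => h3 i, ← Finset.sum_div, Finset.sum_add_distrib,
    ← Finset.mul_sum, h1, h2]

lemma memLp_of_bdd {g : ℝ → ℝ} (hgm : AEStronglyMeasurable g circMeas) {M : ℝ}
    (hM : ∀ x, |g x| ≤ M) (p : ENNReal) : MemLp g p circMeas :=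
  MemLp.of_bound hgm M (Eventually.of_forall hM)

/-- Replacing `φ (κ i)` by the average of `φ ∘ g` under the density `wt V i` costs at most the
Lipschitz constant times the mean deviation, hence is controlled by the variances. -/
lemma abs_sum_sub_integral_le {g : ℝ → ℝ} (hgm : AEStronglyMeasurable g circMeas) {M : ℝ}
    (hM : ∀ x, |g x| ≤ M) {n : ℕ} {V : Matrix (Fin n) (Fin n) ℝ} {kap : Fin n → ℝ}
    (hV : IsFlipDiag g n V kap) {σ : ℝ} (hσ : σ = 1 ∨ σ = -1)
    {φ : ℝ → ℝ} {L : NNReal} (hL : LipschitzWith L φ) (hψ : Integrable (fun x => φ (g x)) circMeas)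
    {η : ℝ} (hη : 0 < η) :
    |∑ i, parWt σ i * φ (kap i) - ∑ i, parWt σ i * ∫ x, φ (g x) * wt V i x ∂circMeas|
      ≤ L * ((η⁻¹ * ∑ i, ∫ x, (g x - kap i) ^ 2 * wt V i x ∂circMeas + η * n) / 2) := by
  obtain ⟨hV1, hVY, hVT⟩ := hV
  have hg : Integrable g circMeas := memLp_one_iff_integrable.1 (memLp_of_bdd hgm hM 1)
  have hone : Integrable (fun _ : ℝ => (1 : ℝ)) circMeas := integrable_const _
  have hterm : ∀ i, |φ (kap i) - ∫ x, φ (g x) * wt V i x ∂circMeas|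
      ≤ L * ((η⁻¹ * ∫ x, (g x - kap i) ^ 2 * wt V i x ∂circMeas + η) / 2) := by
    intro i
    have hdev : Integrable (fun x => (g x - kap i) ^ 2) circMeas :=
      ((memLp_of_bdd hgm hM 2).sub (memLp_const (kap i))).integrable_sq
    have hc : φ (kap i) = ∫ x, φ (kap i) * wt V i x ∂circMeas := by
      rw [integral_const_mul, integral_wt hV1, mul_one]
    have hRHS : L * ((η⁻¹ * ∫ x, (g x - kap i) ^ 2 * wt V i x ∂circMeas + η) / 2)
        = ∫ x, L * ((η⁻¹ * (g x - kap i) ^ 2 + η) / 2) * wt V i x ∂circMeas := by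
      have h1 : ∀ x, L * ((η⁻¹ * (g x - kap i) ^ 2 + η) / 2) * wt V i x
          = (L * η⁻¹ / 2) * ((g x - kap i) ^ 2 * wt V i x) + (L * η / 2) * (1 * wt V i x) :=
        fun x => by ring
      simp only [h1]
      rw [integral_add ((integrable_mul_wt hV1 i hdev).const_mul _)
        ((integrable_mul_wt hV1 i hone).const_mul _), integral_const_mul, integral_const_mul]
      simp only [one_mul, integral_wt hV1]
      ring
    rw [hRHS, hc, ← integral_sub (integrable_mul_wt hV1 i (integrable_const _))
      (integrable_mul_wt hV1 i hψ)]
    refine abs_integral_le_integral_abs.trans (integral_mono ?_ ?_ ?_)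
    · exact ((integrable_mul_wt hV1 i (integrable_const _)).sub (integrable_mul_wt hV1 i hψ)).abs
    · exact integrable_mul_wt hV1 i ((((hdev.const_mul _).add (integrable_const _)).div_const 2).const_mul _)
    · intro x
      simp only
      rw [← sub_mul, abs_mul, abs_of_nonneg (wt_nonneg V i x)]
      refine mul_le_mul_of_nonneg_right ?_ (wt_nonneg V i x)
      have hl := hL.dist_le_mul (kap i) (g x)
      rw [Real.dist_eq, Real.dist_eq, abs_sub_comm (kap i)] at hl
      exact hl.trans (mul_le_mul_of_nonneg_left (abs_le_young _ hη) L.coe_nonneg)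
  rw [← Finset.sum_sub_distrib]
  calc |∑ i, (parWt σ i * φ (kap i) - parWt σ i * ∫ x, φ (g x) * wt V i x ∂circMeas)|
      ≤ ∑ i, |parWt σ i * φ (kap i) - parWt σ i * ∫ x, φ (g x) * wt V i x ∂circMeas| :=
        Finset.abs_sum_le_sum_abs _ _
    _ ≤ ∑ i, L * ((η⁻¹ * ∫ x, (g x - kap i) ^ 2 * wt V i x ∂circMeas + η) / 2) := by
        refine Finset.sum_le_sum fun i _ => ?_
        rw [← mul_sub, abs_mul, abs_of_nonneg (parWt_nonneg hσ i)]
        exact (mul_le_of_le_one_left (abs_nonneg _) (parWt_le_one hσ i)).trans (hterm i)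
    _ = _ := by
        rw [← Finset.mul_sum, ← Finset.sum_div, Finset.sum_add_distrib, ← Finset.mul_sum]
        simp [mul_comm]

/-- Distribution of each parity class for a bounded even symbol, tested on Lipschitz functions. -/
lemma tendsto_of_bdd {g : ℝ → ℝ} (hgm : AEStronglyMeasurable g circMeas) {M : ℝ}
    (hM : ∀ x, |g x| ≤ M) (heven : ∀ x, g (-x) = g x)
    {V : (n : ℕ) → Matrix (Fin n) (Fin n) ℝ} {kap : (n : ℕ) → Fin n → ℝ}
    (hV : ∀ n, IsFlipDiag g n (V n) (kap n)) {σ : ℝ} (hσ : σ = 1 ∨ σ = -1)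
    {φ : ℝ → ℝ} {L : NNReal} (hL : LipschitzWith L φ) :
    Tendsto (fun n : ℕ => (n⁻¹ : ℝ) * ∑ i, parWt σ i * φ (kap n i)) atTop
      (nhds ((∫ x, φ (g x) ∂circMeas) / 2)) := by
  have hg : Integrable g circMeas := memLp_one_iff_integrable.1 (memLp_of_bdd hgm hM 1)
  have hg2 := memLp_of_bdd hgm hM 2
  have hψm : AEStronglyMeasurable (fun x => φ (g x)) circMeas :=
    hL.continuous.comp_aestronglyMeasurable hgm
  have hψb : ∀ x, |φ (g x)| ≤ |φ 0| + L * M := by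
    intro x
    have hl := hL.dist_le_mul (g x) 0
    rw [Real.dist_eq, Real.dist_eq, sub_zero] at hl
    have h1 := mul_le_mul_of_nonneg_left (hM x) L.coe_nonneg
    have h2 := abs_sub_abs_le_abs_sub (φ (g x)) (φ 0)
    linarith
  have hψ : Integrable (fun x => φ (g x)) circMeas :=
    memLp_one_iff_integrable.1 (memLp_of_bdd hψm hψb 1)
  have hSψ := hasSum_sq_cosCoef (memLp_of_bdd hψm hψb 2) hψ (fun x => by rw [heven])
  set S := ∫ x, φ (g x) ^ 2 ∂circMeas
  set I := ∫ x, φ (g x) ∂circMeas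
  set W : ℕ → ℝ := fun n => ∑ i, ∫ x, (g x - kap n i) ^ 2 * wt (V n) i x ∂circMeas with hW
  have hvar : Tendsto (fun n : ℕ => (n⁻¹ : ℝ) * W n) atTop (nhds 0) := by
    have h1 := tendsto_cesaro_int (hasSum_sq_cosCoef hg2 hg heven)
      (fun k => by rw [cosCoef_neg])
    have h2 := (tendsto_const_nhds (x := ∫ x, g x ^ 2 ∂circMeas)).sub h1
    rw [sub_self] at h2
    refine h2.congr' ?_
    filter_upwards [eventually_gt_atTop 0] with n hn
    have hn' : (n : ℝ) ≠ 0 := by positivity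
    simp only [hW]
    rw [sum_variance hg hg2.integrable_sq (hV n)]
    field_simp
  have hbound : ∀ η : ℝ, 0 < η → ∀ n : ℕ, 0 < n →
      |(n⁻¹ : ℝ) * ∑ i, parWt σ i * φ (kap n i) - I / 2|
        ≤ L * ((η⁻¹ * ((n⁻¹ : ℝ) * W n) + η) / 2) + (η⁻¹ * (S * (n⁻¹ : ℝ)) + η) / 4 := by
    intro η hη n hn
    have hn' : (0 : ℝ) < n := by positivity
    have h1 := abs_sum_sub_integral_le hgm hM (hV n) hσ hL hψ hη
    rw [integral_mul_parWt hψ (hV n).1 (hV n).2.1] at h1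
    have h2 := abs_sum_cosCoef_le hSψ n hη
    set A := ∑ i, parWt σ i * φ (kap n i)
    set B := ∑ k : Fin n, cosCoef (fun x => φ (g x)) (2 * (k : ℤ) + 1 - n)
    have h3 : |σ * B| = |B| := by
      rcases hσ with rfl | rfl <;> simp
    have h4 : |A - n * I / 2| ≤ L * ((η⁻¹ * W n + η * n) / 2) + ((η⁻¹ * S + η * n) / 2) / 2 := by
      have : A - n * I / 2 = (A - (n * I + σ * B) / 2) + σ * B / 2 := by ring
      rw [this]
      refine (abs_add_le _ _).trans (add_le_add h1 ?_)
      rw [abs_div, h3, abs_two]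
      linarith
    have h5 : (n⁻¹ : ℝ) * A - I / 2 = (n⁻¹ : ℝ) * (A - n * I / 2) := by field_simp
    rw [h5, abs_mul, abs_of_pos (inv_pos.2 hn')]
    refine (mul_le_mul_of_nonneg_left h4 (inv_pos.2 hn').le).trans (le_of_eq ?_)
    field_simp
    ring
  rw [Metric.tendsto_atTop]
  intro ε hε
  set η : ℝ := ε / (2 * (L + 1)) with hη
  have hLp : (0 : ℝ) < L + 1 := by positivity
  have hηp : 0 < η := by positivity
  have hlim : Tendsto (fun n : ℕ => L * ((η⁻¹ * ((n⁻¹ : ℝ) * W n) + η) / 2)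
      + (η⁻¹ * (S * (n⁻¹ : ℝ)) + η) / 4) atTop
      (nhds (L * ((η⁻¹ * 0 + η) / 2) + (η⁻¹ * (S * 0) + η) / 4)) := by
    have hinv : Tendsto (fun n : ℕ => (n⁻¹ : ℝ)) atTop (nhds 0) :=
      tendsto_inv_atTop_nhds_zero_nat
    exact ((((hvar.const_mul _).add_const _).div_const _).const_mul _).add
      ((((hinv.const_mul _).const_mul _).add_const _).div_const _)
  have hlt : L * ((η⁻¹ * 0 + η) / 2) + (η⁻¹ * (S * 0) + η) / 4 < ε := by
    have : (L + 1) * η = ε / 2 := by rw [hη]; field_simp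
    simp only [mul_zero, zero_add]
    nlinarith
  obtain ⟨N, hN⟩ := eventually_atTop.1 ((hlim.eventually_lt_const hlt).and (eventually_gt_atTop 0))
  refine ⟨N, fun n hn => ?_⟩
  rw [Real.dist_eq]
  exact (hbound η hηp n (hN n hn).2).trans_lt (hN n hn).1

/-! ### Integrable symbols -/

/-- The truncation of `f` to values in `[-m, m]`. -/
noncomputable def trunc (f : ℝ → ℝ) (m : ℕ) (x : ℝ) : ℝ := max (-(m : ℝ)) (min (f x) m)

lemma abs_trunc_le (f : ℝ → ℝ) (m : ℕ) (x : ℝ) : |trunc f m x| ≤ m := by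
  have hm : (0 : ℝ) ≤ m := m.cast_nonneg
  rw [abs_le]
  exact ⟨le_max_left _ _, max_le (by linarith) (min_le_right _ _)⟩

lemma aestronglyMeasurable_trunc {f : ℝ → ℝ} (hf : Integrable f circMeas) (m : ℕ) :
    AEStronglyMeasurable (trunc f m) circMeas := by
  have : Continuous (fun y : ℝ => max (-(m : ℝ)) (min y m)) := by fun_prop
  exact this.comp_aestronglyMeasurable hf.1

lemma tendsto_integral_trunc {f : ℝ → ℝ} (hf : Integrable f circMeas) :
    Tendsto (fun m : ℕ => ∫ x, |f x - trunc f m x| ∂circMeas) atTop (nhds 0) := by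
  have h0 : (0 : ℝ) = ∫ _, (0 : ℝ) ∂circMeas := by simp
  rw [h0]
  refine tendsto_integral_of_dominated_convergence (fun x => |f x|) (fun m => ?_) hf.abs
    (fun m => Eventually.of_forall fun x => ?_) (Eventually.of_forall fun x => ?_)
  · exact (hf.1.sub (aestronglyMeasurable_trunc hf m)).norm
  · have hm : (0 : ℝ) ≤ m := m.cast_nonneg
    rw [Real.norm_eq_abs, abs_abs, trunc]
    rcases le_total (f x) m with h1 | h1
    · rw [min_eq_left h1]
      rcases le_total (-(m : ℝ)) (f x) with h2 | h2
      · rw [max_eq_right h2]; simp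
      · rw [max_eq_left h2, abs_of_nonpos (by linarith), abs_of_nonpos (by linarith)]; linarith
    · rw [min_eq_right h1, max_eq_right (by linarith), abs_of_nonneg (by linarith),
        abs_of_nonneg (by linarith)]
      linarith
  · refine tendsto_const_nhds.congr' ?_
    filter_upwards [eventually_ge_atTop ⌈|f x|⌉₊] with m hm
    have h1 : |f x| ≤ m := Nat.ceil_le.1 hm
    rw [abs_le] at h1
    rw [trunc, min_eq_left h1.2, max_eq_right h1.1]
    simp

/-- Distribution of each parity class for an integrable even symbol, tested on convex Lipschitz
functions, by truncating the symbol. -/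
lemma tendsto_of_convex {f : ℝ → ℝ} (hf : Integrable f circMeas) (heven : ∀ x, f (-x) = f x)
    {V : (n : ℕ) → Matrix (Fin n) (Fin n) ℝ} {lam : (n : ℕ) → Fin n → ℝ}
    (hV : ∀ n, IsFlipDiag f n (V n) (lam n)) {σ : ℝ} (hσ : σ = 1 ∨ σ = -1)
    {φ : ℝ → ℝ} (hφ : ConvexOn ℝ Set.univ φ) {L : NNReal} (hL : LipschitzWith L φ) :
    Integrable (fun x => φ (f x)) circMeas ∧
    Tendsto (fun n : ℕ => (n⁻¹ : ℝ) * ∑ i, parWt σ i * φ (lam n i)) atTop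
      (nhds ((∫ x, φ (f x) ∂circMeas) / 2)) := by
  have hcomp_int : ∀ h : ℝ → ℝ, Integrable h circMeas → Integrable (fun x => φ (h x)) circMeas := by
    intro h hh
    refine ((hh.abs.const_mul L).add (integrable_const |φ 0|)).mono'
      (hL.continuous.comp_aestronglyMeasurable hh.1) (Eventually.of_forall fun x => ?_)
    have hl := hL.dist_le_mul (h x) 0
    rw [Real.dist_eq, Real.dist_eq, sub_zero] at hl
    have h2 := abs_sub_abs_le_abs_sub (φ (h x)) (φ 0)
    simp only [Pi.add_apply, Real.norm_eq_abs]
    linarith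
  refine ⟨hcomp_int f hf, ?_⟩
  rw [Metric.tendsto_atTop]
  intro ε hε
  have hsmall : ∀ᶠ m : ℕ in atTop, L * ∫ x, |f x - trunc f m x| ∂circMeas < ε / 3 := by
    have := (tendsto_integral_trunc hf).const_mul (L : ℝ)
    rw [mul_zero] at this
    exact this.eventually_lt_const (by positivity)
  obtain ⟨m, hm⟩ := hsmall.exists
  set g := trunc f m with hgdef
  have hgm : AEStronglyMeasurable g circMeas := aestronglyMeasurable_trunc hf m
  have hgb : ∀ x, |g x| ≤ m := abs_trunc_le f m
  have hge : ∀ x, g (-x) = g x := fun x => by simp only [hgdef, trunc, heven]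
  have hg : Integrable g circMeas := memLp_one_iff_integrable.1 (memLp_of_bdd hgm hgb 1)
  choose U kap hU using exists_isFlipDiag hg
  have hlim := tendsto_of_bdd hgm hgb hge hU hσ hL
  rw [Metric.tendsto_atTop] at hlim
  obtain ⟨N, hN⟩ := hlim (ε / 3) (by positivity)
  have hI : |(∫ x, φ (g x) ∂circMeas) / 2 - (∫ x, φ (f x) ∂circMeas) / 2| < ε / 3 := by
    have h1 : |(∫ x, φ (g x) ∂circMeas) - ∫ x, φ (f x) ∂circMeas|
        ≤ L * ∫ x, |f x - g x| ∂circMeas := by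
      rw [← integral_sub (hcomp_int g hg) (hcomp_int f hf), ← integral_const_mul]
      refine abs_integral_le_integral_abs.trans
        (integral_mono ((hcomp_int g hg).sub (hcomp_int f hf)).abs ((hf.sub hg).abs.const_mul _) fun x => ?_)
      have hl := hL.dist_le_mul (g x) (f x)
      rw [Real.dist_eq, Real.dist_eq, abs_sub_comm (g x)] at hl
      exact hl
    rw [← sub_div, abs_div, abs_two]
    have := abs_nonneg ((∫ x, φ (g x) ∂circMeas) - ∫ x, φ (f x) ∂circMeas)
    linarith
  refine ⟨max N 1, fun n hn => ?_⟩
  have hn0 : (0 : ℝ) < n := by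
    have : 0 < n := by have := le_max_right N 1; omega
    positivity
  have h1 := hN n ((le_max_left _ _).trans hn)
  have h2 := abs_sum_convex_sub_le hf hg (hV n) (hU n) hσ hφ hL
  rw [Real.dist_eq] at h1 ⊢
  have h3 : |(n⁻¹ : ℝ) * ∑ i, parWt σ i * φ (lam n i) - (n⁻¹ : ℝ) * ∑ i, parWt σ i * φ (kap n i)|
      < ε / 3 := by
    rw [← mul_sub, abs_mul, abs_of_pos (inv_pos.2 hn0)]
    refine (mul_le_mul_of_nonneg_left h2 (inv_pos.2 hn0).le).trans_lt (lt_of_eq_of_lt ?_ hm)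
    field_simp
  rw [abs_lt] at *
  constructor <;> linarith [h1.1, h1.2, h3.1, h3.2, hI.1, hI.2]

/-! ### Continuous test functions of compact support -/

/-- Differences of two convex Lipschitz functions on the real line. -/
def IsDC (d : ℝ → ℝ) : Prop :=
  ∃ φ ψ : ℝ → ℝ, ∃ L L' : NNReal, ConvexOn ℝ Set.univ φ ∧ ConvexOn ℝ Set.univ ψ ∧
    LipschitzWith L φ ∧ LipschitzWith L' ψ ∧ ∀ x, d x = φ x - ψ x

lemma IsDC.neg {d : ℝ → ℝ} (h : IsDC d) : IsDC (fun x => -d x) := by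
  obtain ⟨φ, ψ, L, L', h1, h2, h3, h4, h5⟩ := h
  exact ⟨ψ, φ, L', L, h2, h1, h4, h3, fun x => by simp only [h5]; ring⟩

lemma IsDC.max {d e : ℝ → ℝ} (h : IsDC d) (h' : IsDC e) : IsDC (fun x => max (d x) (e x)) := by
  obtain ⟨a, b, La, Lb, ha, hb, la, lb, h5⟩ := h
  obtain ⟨p, q, Lp, Lq, hp, hq, lp, lq, h6⟩ := h'
  refine ⟨(a + q) ⊔ (p + b), b + q, _, _, (ha.add hq).sup (hp.add hb), hb.add hq,
    (la.add lq).max (lp.add lb), lb.add lq, fun x => ?_⟩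
  simp only [Pi.sup_apply, Pi.add_apply, h5, h6]
  rw [← max_sub_sub_right]
  congr 1 <;> ring

lemma IsDC.min {d e : ℝ → ℝ} (h : IsDC d) (h' : IsDC e) : IsDC (fun x => min (d x) (e x)) := by
  have := (h.neg.max h'.neg).neg
  simpa [max_neg_neg] using this

lemma isDC_affine (a b : ℝ) : IsDC (fun x => a * x + b) := by
  refine ⟨fun x => a * x + b, fun _ => 0, ‖a‖₊, 0, ⟨convex_univ, ?_⟩, convexOn_const _ convex_univ,
    LipschitzWith.of_dist_le_mul ?_, LipschitzWith.const _, fun x => by simp⟩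
  · intro x _ y _ p q _ _ hpq
    refine le_of_eq ?_
    simp only [smul_eq_mul]
    linear_combination (-b) * hpq
  · intro x y
    rw [Real.dist_eq, Real.dist_eq, coe_nnnorm, Real.norm_eq_abs, ← abs_mul]
    refine le_of_eq ?_
    congr 1; ring

/-- Differences of convex Lipschitz functions are uniformly dense in the continuous compactly
supported functions: they form a lattice, so the lattice Stone-Weierstrass theorem gives an
approximation on a compact interval, which is then clamped between `-θ` and `θ` for a trapezoid
function `θ`. -/
lemma exists_isDC_approx {F : ℝ → ℝ} (hF : Continuous F) {R : ℝ} (hR : ∀ x, R < |x| → F x = 0)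
    {ε : ℝ} (hε : 0 < ε) : ∃ d, IsDC d ∧ ∀ x, |F x - d x| ≤ ε := by
  let X := Set.Icc (-(R + 1)) (R + 1)
  have : CompactSpace X := isCompact_iff_compactSpace.1 isCompact_Icc
  let A : Set C(X, ℝ) := {h | ∃ d, IsDC d ∧ ∀ x : X, h x = d x}
  have hA : closure A = ⊤ := by
    refine ContinuousMap.sublattice_closure_eq_top A ?_ ?_ ?_ ?_
    · exact ⟨⟨fun x => 0 * (x : ℝ) + 0, by fun_prop⟩, _, isDC_affine 0 0, fun x => rfl⟩
    · rintro f ⟨d, hd, hfd⟩ g ⟨e, he, hge⟩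
      exact ⟨_, hd.min he, fun x => by rw [ContinuousMap.inf_apply, hfd, hge]⟩
    · rintro f ⟨d, hd, hfd⟩ g ⟨e, he, hge⟩
      exact ⟨_, hd.max he, fun x => by rw [ContinuousMap.sup_apply, hfd, hge]⟩
    · intro v x y
      by_cases hxy : x = y
      · subst hxy
        refine ⟨⟨fun z => 0 * (z : ℝ) + v x, by fun_prop⟩, ⟨_, isDC_affine 0 (v x),
          fun z => rfl⟩, ?_, ?_⟩ <;> simp
      · have hne : (x : ℝ) - y ≠ 0 := fun h => hxy (Subtype.ext (sub_eq_zero.1 h))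
        refine ⟨⟨fun z => (v x - v y) / (x - y) * (z : ℝ)
          + (v x - (v x - v y) / (x - y) * x), by fun_prop⟩, ⟨_, isDC_affine _ _,
          fun z => rfl⟩, ?_, ?_⟩
        · simp
        · simp only [ContinuousMap.coe_mk]
          field_simp
          ring
  obtain ⟨B, hB⟩ := (isCompact_Icc (a := -R) (b := R)).exists_bound_of_continuousOn
    hF.continuousOn
  have hB' : ∀ x, |F x| ≤ max B 0 := by
    intro x
    by_cases hx : R < |x|
    · rw [hR x hx]; simp
    · push Not at hx
      exact (hB x (abs_le.1 hx)).trans (le_max_left _ _)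
  set B' := max B 0
  have hB0 : 0 ≤ B' := le_max_right _ _
  have hmem : (⟨fun x : X => F x, by fun_prop⟩ : C(X, ℝ)) ∈ closure A := by rw [hA]; trivial
  obtain ⟨h, ⟨d, hd, hhd⟩, hdist⟩ := Metric.mem_closure_iff.1 hmem ε hε
  have happ : ∀ x, |x| ≤ R + 1 → |F x - d x| ≤ ε := by
    intro x hx
    have h1 := ContinuousMap.dist_apply_le_dist (f := (⟨fun x : X => F x, by fun_prop⟩ : C(X, ℝ)))
      (g := h) ⟨x, abs_le.1 hx⟩
    rw [hhd, Real.dist_eq] at h1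
    exact h1.trans hdist.le
  let θ : ℝ → ℝ := fun x => max (0 * x + 0) (min (0 * x + B')
    (min (-B' * x + B' * (R + 1)) (B' * x + B' * (R + 1))))
  have hθ : IsDC θ := (isDC_affine _ _).max ((isDC_affine _ _).min
    ((isDC_affine _ _).min (isDC_affine _ _)))
  refine ⟨fun x => max (-θ x) (min (d x) (θ x)), hθ.neg.max (hd.min hθ), fun x => ?_⟩
  have hθ0 : 0 ≤ θ x := by
    have : 0 * x + 0 ≤ θ x := le_max_left _ _
    linarith
  have hclamp : ∀ y t : ℝ, |y| ≤ t → |y - d x| ≤ ε → |y - max (-t) (min (d x) t)| ≤ ε := by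
    intro y t hy hyd
    rw [abs_le] at *
    rcases le_total (d x) t with h1 | h1
    · rw [min_eq_left h1]
      rcases le_total (-t) (d x) with h2 | h2
      · rw [max_eq_right h2]; exact hyd
      · rw [max_eq_left h2]; constructor <;> linarith
    · rw [min_eq_right h1, max_eq_right (by linarith)]; constructor <;> linarith
  by_cases h1 : |x| ≤ R
  · have hθx : B' ≤ θ x := by
      rw [abs_le] at h1
      refine le_trans ?_ (le_max_right _ _)
      refine le_min (by linarith) (le_min ?_ ?_) <;> nlinarith
    exact hclamp _ _ ((hB' x).trans hθx) (happ x (by linarith))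
  · push Not at h1
    by_cases h2 : |x| ≤ R + 1
    · exact hclamp _ _ (by rw [hR x h1]; simpa using hθ0) (happ x h2)
    · push Not at h2
      have hθx : θ x = 0 := by
        refine le_antisymm (max_le (by linarith) ?_) hθ0
        rcases lt_abs.1 h2 with h3 | h3
        · exact (min_le_right _ _).trans ((min_le_left _ _).trans (by nlinarith))
        · exact (min_le_right _ _).trans ((min_le_right _ _).trans (by nlinarith))
      beta_reduce
      rw [hR x h1, hθx]
      simp only [neg_zero, zero_sub, abs_neg]
      rw [max_eq_left (min_le_right _ _)]
      simpa using hε.le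

/-- Distribution of each parity class for an integrable even symbol, tested on continuous functions
of compact support. -/
lemma tendsto_of_compactSupport {f : ℝ → ℝ} (hf : Integrable f circMeas)
    (heven : ∀ x, f (-x) = f x)
    {V : (n : ℕ) → Matrix (Fin n) (Fin n) ℝ} {lam : (n : ℕ) → Fin n → ℝ}
    (hV : ∀ n, IsFlipDiag f n (V n) (lam n)) {σ : ℝ} (hσ : σ = 1 ∨ σ = -1)
    {F : ℝ → ℝ} (hF : Continuous F) {R : ℝ} (hR : ∀ x, R < |x| → F x = 0) :
    Integrable (fun x => F (f x)) circMeas ∧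
    Tendsto (fun n : ℕ => (n⁻¹ : ℝ) * ∑ i, parWt σ i * F (lam n i)) atTop
      (nhds ((∫ x, F (f x) ∂circMeas) / 2)) := by
  have hcomp_int : Integrable (fun x => F (f x)) circMeas := by
    obtain ⟨B, hB⟩ := (isCompact_Icc (a := -R) (b := R)).exists_bound_of_continuousOn
      hF.continuousOn
    refine memLp_one_iff_integrable.1 (memLp_of_bdd (M := max B 0)
      (hF.comp_aestronglyMeasurable hf.1) (fun x => ?_) 1)
    by_cases hx : R < |f x|
    · rw [hR _ hx]; simp
    · push Not at hx
      exact (hB _ (abs_le.1 hx)).trans (le_max_left _ _)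
  refine ⟨hcomp_int, ?_⟩
  rw [Metric.tendsto_atTop]
  intro ε hε
  obtain ⟨d, ⟨φ, ψ, L, L', hφ, hψ, lφ, lψ, hd⟩, happ⟩ :=
    exists_isDC_approx hF hR (ε := ε / 4) (by positivity)
  obtain ⟨hi1, ht1⟩ := tendsto_of_convex hf heven hV hσ hφ lφ
  obtain ⟨hi2, ht2⟩ := tendsto_of_convex hf heven hV hσ hψ lψ
  have ht : Tendsto (fun n : ℕ => (n⁻¹ : ℝ) * ∑ i, parWt σ i * d (lam n i)) atTop
      (nhds ((∫ x, d (f x) ∂circMeas) / 2)) := by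
    simp only [hd, mul_sub, Finset.sum_sub_distrib]
    rw [integral_sub hi1 hi2, sub_div]
    exact ht1.sub ht2
  have hid : Integrable (fun x => d (f x)) circMeas := by
    simp only [hd]; exact hi1.sub hi2
  have hI : |(∫ x, d (f x) ∂circMeas) / 2 - (∫ x, F (f x) ∂circMeas) / 2| ≤ ε / 4 := by
    have h1 : |(∫ x, d (f x) ∂circMeas) - ∫ x, F (f x) ∂circMeas| ≤ ε / 4 := by
      rw [← integral_sub hid hcomp_int]
      refine abs_integral_le_integral_abs.trans ?_
      have := integral_mono (hid.sub hcomp_int).abs (integrable_const (μ := circMeas) (ε / 4))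
        (fun x => by
          simp only [Pi.sub_apply]
          rw [abs_sub_comm]; exact happ (f x))
      simpa using this
    rw [← sub_div, abs_div, abs_two]
    linarith
  rw [Metric.tendsto_atTop] at ht
  obtain ⟨N, hN⟩ := ht (ε / 4) (by positivity)
  refine ⟨max N 1, fun n hn => ?_⟩
  have hn0 : (0 : ℝ) < n := by
    have : 0 < n := by have := le_max_right N 1; omega
    positivity
  have h1 := hN n ((le_max_left _ _).trans hn)
  rw [Real.dist_eq] at h1 ⊢
  have h3 : |(n⁻¹ : ℝ) * ∑ i, parWt σ i * F (lam n i) - (n⁻¹ : ℝ) * ∑ i, parWt σ i * d (lam n i)|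
      ≤ ε / 4 := by
    rw [← mul_sub, abs_mul, abs_of_pos (inv_pos.2 hn0), ← Finset.sum_sub_distrib,
      inv_mul_le_iff₀ hn0]
    calc |∑ i, (parWt σ i * F (lam n i) - parWt σ i * d (lam n i))|
        ≤ ∑ i, |parWt σ i * F (lam n i) - parWt σ i * d (lam n i)| := Finset.abs_sum_le_sum_abs _ _
      _ ≤ ∑ _i : Fin n, ε / 4 := by
          refine Finset.sum_le_sum fun i _ => ?_
          rw [← mul_sub, abs_mul, abs_of_nonneg (parWt_nonneg hσ i)]
          exact (mul_le_of_le_one_left (abs_nonneg _) (parWt_le_one hσ i)).trans (happ _)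
      _ = n * (ε / 4) := by simp
  rw [abs_lt] at h1 ⊢
  rw [abs_le] at h3 hI
  constructor <;> linarith [h1.1, h1.2, h3.1, h3.2, hI.1, hI.2]

/-! ### Complex test functions and the two parity classes -/

/-- `tendsto_of_compactSupport` for complex-valued test functions on `ℂ`. -/
lemma tendsto_complex {f : ℝ → ℝ} (hf : Integrable f circMeas)
    (heven : ∀ x, f (-x) = f x)
    {V : (n : ℕ) → Matrix (Fin n) (Fin n) ℝ} {lam : (n : ℕ) → Fin n → ℝ}
    (hV : ∀ n, IsFlipDiag f n (V n) (lam n)) {σ : ℝ} (hσ : σ = 1 ∨ σ = -1)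
    {F : ℂ → ℂ} (hF : Continuous F) (hFc : HasCompactSupport F) :
    Tendsto (fun n : ℕ => (n⁻¹ : ℂ) * ∑ i, (parWt σ i : ℂ) * F (lam n i)) atTop
      (nhds ((∫ x, F (f x) ∂circMeas) / 2)) := by
  obtain ⟨R, hR⟩ := hFc.isCompact.isBounded.subset_closedBall 0
  have hR' : ∀ x : ℝ, R < |x| → F x = 0 := by
    intro x hx
    by_contra h
    have := hR (subset_tsupport F h)
    rw [mem_closedBall_zero_iff, Complex.norm_real, Real.norm_eq_abs] at this
    linarith
  obtain ⟨hi1, ht1⟩ := tendsto_of_compactSupport hf heven hV hσ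
    (F := fun x => (F x).re) (by fun_prop) (R := R) (fun x hx => by simp [hR' x hx])
  obtain ⟨hi2, ht2⟩ := tendsto_of_compactSupport hf heven hV hσ
    (F := fun x => (F x).im) (by fun_prop) (R := R) (fun x hx => by simp [hR' x hx])
  have hI : ∫ x, F (f x) ∂circMeas = ((∫ x, (F (f x)).re ∂circMeas : ℝ) : ℂ)
      + ((∫ x, (F (f x)).im ∂circMeas : ℝ) : ℂ) * Complex.I := by
    rw [← integral_complex_ofReal, ← integral_complex_ofReal, ← integral_mul_const,
      ← integral_add hi1.ofReal (hi2.ofReal.mul_const _)]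
    exact integral_congr_ae (Eventually.of_forall fun x => (Complex.re_add_im _).symm)
  have ht := ((Complex.continuous_ofReal.tendsto _).comp ht1).add
    (((Complex.continuous_ofReal.tendsto _).comp ht2).mul_const Complex.I)
  have hlim : (∫ x, F (f x) ∂circMeas) / 2
      = (((∫ x, (F (f x)).re ∂circMeas) / 2 : ℝ) : ℂ)
        + (((∫ x, (F (f x)).im ∂circMeas) / 2 : ℝ) : ℂ) * Complex.I := by
    rw [hI]; push_cast; ring
  rw [hlim]
  refine ht.congr fun n => ?_
  simp only [Function.comp_apply]
  push_cast
  rw [mul_assoc, ← mul_add, Finset.sum_mul, ← Finset.sum_add_distrib]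
  congr 1
  refine Finset.sum_congr rfl fun i _ => ?_
  conv_rhs => rw [← Complex.re_add_im (F (lam n i))]
  ring

lemma sum_range_even (G : ℕ → ℂ) (n : ℕ) :
    ∑ i ∈ Finset.range n, (1 + (-1 : ℂ) ^ i) / 2 * G i
      = ∑ i ∈ Finset.range ((n + 1) / 2), G (2 * i) := by
  induction n with
  | zero => simp
  | succ n ih =>
    rw [Finset.sum_range_succ, ih]
    rcases Nat.even_or_odd' n with ⟨k, rfl | rfl⟩
    · rw [show (2 * k + 1 + 1) / 2 = k + 1 by omega, show (2 * k + 1) / 2 = k by omega,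
        Finset.sum_range_succ, Even.neg_one_pow (even_two_mul k)]
      norm_num
    · rw [show (2 * k + 1 + 1 + 1) / 2 = k + 1 by omega, show (2 * k + 1 + 1) / 2 = k + 1 by omega,
        Odd.neg_one_pow (odd_two_mul_add_one k)]
      norm_num

lemma sum_range_odd (G : ℕ → ℂ) (n : ℕ) :
    ∑ i ∈ Finset.range n, (1 - (-1 : ℂ) ^ i) / 2 * G i
      = ∑ i ∈ Finset.range (n / 2), G (2 * i + 1) := by
  induction n with
  | zero => simp
  | succ n ih =>
    rw [Finset.sum_range_succ, ih]
    rcases Nat.even_or_odd' n with ⟨k, rfl | rfl⟩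
    · rw [show (2 * k + 1) / 2 = k by omega, show (2 * k) / 2 = k by omega,
        Even.neg_one_pow (even_two_mul k)]
      norm_num
    · rw [show (2 * k + 1 + 1) / 2 = k + 1 by omega, show (2 * k + 1) / 2 = k by omega,
        Finset.sum_range_succ, Odd.neg_one_pow (odd_two_mul_add_one k)]
      norm_num

lemma sum_parWt_one {n : ℕ} (hn : ∀ i : Fin ((n + 1) / 2), 2 * i.val < n) (G : Fin n → ℂ) :
    ∑ i, (parWt 1 i : ℂ) * G i = ∑ i : Fin ((n + 1) / 2), G ⟨2 * i.val, hn i⟩ := by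
  let G' : ℕ → ℂ := fun k => if h : k < n then G ⟨k, h⟩ else 0
  have h := sum_range_even G' n
  rw [← Fin.sum_univ_eq_sum_range (fun i => (1 + (-1 : ℂ) ^ i) / 2 * G' i),
    ← Fin.sum_univ_eq_sum_range (fun i => G' (2 * i))] at h
  refine Eq.trans (Finset.sum_congr rfl fun i _ => ?_) (h.trans (Finset.sum_congr rfl fun i _ => ?_))
  · simp [G', parWt]
  · exact dif_pos (hn i)

lemma sum_parWt_neg_one {n : ℕ} (hn : ∀ i : Fin (n / 2), 2 * i.val + 1 < n) (G : Fin n → ℂ) :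
    ∑ i, (parWt (-1) i : ℂ) * G i = ∑ i : Fin (n / 2), G ⟨2 * i.val + 1, hn i⟩ := by
  let G' : ℕ → ℂ := fun k => if h : k < n then G ⟨k, h⟩ else 0
  have h := sum_range_odd G' n
  rw [← Fin.sum_univ_eq_sum_range (fun i => (1 - (-1 : ℂ) ^ i) / 2 * G' i),
    ← Fin.sum_univ_eq_sum_range (fun i => G' (2 * i + 1))] at h
  refine Eq.trans (Finset.sum_congr rfl fun i _ => ?_) (h.trans (Finset.sum_congr rfl fun i _ => ?_))
  · simp [G', parWt, sub_eq_add_neg]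
  · exact dif_pos (hn i)

/-- Replacing the normalization `n / 2` by the integer `m n` with `|2 m n - n| ≤ 1` does not change
the limit of averages. -/
lemma tendsto_div_of_tendsto_inv_mul {S : ℕ → ℂ} {c : ℂ} {m : ℕ → ℕ}
    (hm : ∀ n, n ≤ 2 * m n + 1 ∧ 2 * m n ≤ n + 1)
    (h : Tendsto (fun n : ℕ => (n⁻¹ : ℂ) * S n) atTop (nhds (c / 2))) :
    Tendsto (fun n => S n / (m n : ℂ)) atTop (nhds c) := by
  have h1 : Tendsto (fun n : ℕ => (m n : ℝ) / n) atTop (nhds (1 / 2)) := by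
    rw [tendsto_iff_norm_sub_tendsto_zero]
    refine squeeze_zero' (Eventually.of_forall fun _ => norm_nonneg _) ?_
      tendsto_one_div_atTop_nhds_zero_nat
    filter_upwards [eventually_gt_atTop 0] with n hn
    have hn' : (0 : ℝ) < n := by exact_mod_cast hn
    have ha : (n : ℝ) ≤ 2 * m n + 1 := by exact_mod_cast (hm n).1
    have hb : (2 : ℝ) * m n ≤ n + 1 := by exact_mod_cast (hm n).2
    rw [Real.norm_eq_abs, show (m n : ℝ) / n - 1 / 2 = (m n - n / 2) / n by field_simp,
      abs_div, abs_of_pos hn']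
    gcongr
    rw [abs_le]
    constructor <;> linarith
  have h2 : Tendsto (fun n : ℕ => (m n : ℂ) / n) atTop (nhds (1 / 2)) := by
    have := (Complex.continuous_ofReal.tendsto _).comp h1
    simpa [Function.comp_def] using this
  have h3 := h.div h2 (by norm_num)
  rw [show c / 2 / (1 / 2) = c by ring] at h3
  refine h3.congr' ?_
  filter_upwards [eventually_gt_atTop 1] with n hn
  have hn' : (n : ℂ) ≠ 0 := by exact_mod_cast (by omega : n ≠ 0)
  have hm' : (m n : ℂ) ≠ 0 := by
    have := (hm n).1
    exact_mod_cast (by omega : m n ≠ 0)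
  simp only [Pi.div_apply]
  field_simp

/-- Let `f ∈ L¹([-π,π])` be real-valued and even, with
`ess inf_{[0,π]} f > -∞` or `ess sup_{[0,π]} f < ∞`.  Then for every `n` there are a real
unitary matrix `V_n` and orderings of the eigenvalues of `T_n(f)` and `H_n(f) = Y_n T_n(f)`
realizing simultaneous diagonalizations `Y_n = V_n Δ_n V_nᵀ`, `T_n(f) = V_n D_n V_nᵀ`,
`H_n(f) = V_n Δ_n D_n V_nᵀ`, with `λ_i(H_n) = (-1)^{i+1} λ_i(T_n)`, and the odd-indexed
eigenvalues distribute as `f` while the negated even-indexed ones distribute as `-f`. -/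
theorem stmt0
    (f : ℝ → ℝ)
    (hf_int : IntegrableOn f (Set.Icc (-Real.pi) Real.pi))
    (hf_even : ∀ x, f (-x) = f x)
    (hbdd : (⊥ : EReal) < sInf ((fun t : ℝ => (t : EReal)) '' essRangeR f (Set.Icc 0 Real.pi))
          ∨ sSup ((fun t : ℝ => (t : EReal)) '' essRangeR f (Set.Icc 0 Real.pi)) < (⊤ : EReal)) :
    ∃ (V : (n : ℕ) → Matrix (Fin n) (Fin n) ℝ) (lamT lamH : (n : ℕ) → Fin n → ℝ),
      (∀ n : ℕ,
        V n * (V n)ᵀ = 1 ∧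
        flipM n = V n * Matrix.diagonal (fun i : Fin n => ((-1 : ℝ)) ^ (i : ℕ)) * (V n)ᵀ ∧
        toeplitzR (fun x => (f x : ℂ)) n = V n * Matrix.diagonal (lamT n) * (V n)ᵀ ∧
        flipM n * toeplitzR (fun x => (f x : ℂ)) n
          = V n * (Matrix.diagonal (fun i : Fin n => ((-1 : ℝ)) ^ (i : ℕ))
              * Matrix.diagonal (lamT n)) * (V n)ᵀ ∧
        (∀ i : Fin n, lamH n i = (-1 : ℝ) ^ (i : ℕ) * lamT n i)) ∧
      (∀ F : ℂ → ℂ, Continuous F → HasCompactSupport F →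
        Tendsto (fun n : ℕ =>
            (∑ i : Fin ((n + 1) / 2),
              F ((lamT n ⟨2 * i.val, by have := i.isLt; omega⟩ : ℝ) : ℂ))
              / (((n + 1) / 2 : ℕ) : ℂ))
          atTop (nhds ((∫ x in (-Real.pi)..Real.pi, F ((f x : ℝ) : ℂ)) / (2 * Real.pi)))) ∧
      (∀ F : ℂ → ℂ, Continuous F → HasCompactSupport F →
        Tendsto (fun n : ℕ =>
            (∑ i : Fin (n / 2),
              F ((-lamT n ⟨2 * i.val + 1, by have := i.isLt; omega⟩ : ℝ) : ℂ))
              / ((n / 2 : ℕ) : ℂ))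
          atTop (nhds ((∫ x in (-Real.pi)..Real.pi, F ((-f x : ℝ) : ℂ)) / (2 * Real.pi)))) := by
  have hf := integrable_circMeas hf_int
  choose V lam hV using exists_isFlipDiag hf
  have hlim : ∀ G : ℝ → ℂ, (∫ x in (-Real.pi)..Real.pi, G x) / (2 * Real.pi)
      = ∫ x, G x ∂circMeas := by
    intro G
    rw [integral_circMeas, Complex.real_smul]
    push_cast
    ring
  refine ⟨V, lam, fun n i => (-1 : ℝ) ^ (i : ℕ) * lam n i, fun n => ?_, ?_, ?_⟩
  · obtain ⟨h1, h2, h3⟩ := hV n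
    refine ⟨h1, h2, h3, ?_, fun i => rfl⟩
    rw [h2, h3]
    simp only [Matrix.mul_assoc]
    rw [← Matrix.mul_assoc (V n)ᵀ (V n), mul_eq_one_comm.1 h1, Matrix.one_mul]
  · intro F hF hFc
    rw [hlim]
    have h := tendsto_complex hf hf_even hV (Or.inl rfl) hF hFc
    refine tendsto_div_of_tendsto_inv_mul (m := fun n => (n + 1) / 2) (fun n => by omega)
      (h.congr fun n => ?_)
    rw [sum_parWt_one fun i => by have := i.isLt; omega]
  · intro F hF hFc
    rw [hlim]
    have h := tendsto_complex hf hf_even hV (Or.inr rfl) (F := fun z => F (-z)) (by fun_prop)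
      (hFc.comp_homeomorph (Homeomorph.neg ℂ))
    simp only [← Complex.ofReal_neg] at h
    refine tendsto_div_of_tendsto_inv_mul (m := fun n => n / 2) (fun n => by omega)
      (h.congr fun n => ?_)
    rw [sum_parWt_neg_one fun i => by have := i.isLt; omega]
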